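/- arXiv:2201.02717 — 2 statements merged into one kernel-verified Lean document; each statement's English description precedes it below -/
import Mathlib

section
/- Let I ⊆ J be two homogeneous ideals of R with R/I of finite length. If J is contained in the tight closure I* of I, then the Frobenius–Poincaré functions coincide: F(R,R,I)(y) = F(R,R,J)(y) for every complex number y. -/
open Filter Complex

noncomputable section

/-- The Frobenius bracket power `I^{[q]}` of an ideal. -/
def bracketPow {R : Type*} [CommSemiring R] (I : Ideal R) (q : ℕ) : Ideal R :=
  Ideal.span ((fun x : R => x ^ q) '' (I : Set R))

/-- `x` lies in the tight closure `I*` of `I`: there is a `c` outside every minimal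
prime of `R` with `c·x^{p^n} ∈ I^{[p^n]}` for all large `n`. -/
def MemTightClosure {R : Type*} [CommRing R] (p : ℕ) (I : Ideal R) (x : R) : Prop :=
  ∃ c : R, (∀ P ∈ minimalPrimes R, c ∉ P) ∧
    ∃ N : ℕ, ∀ n : ℕ, N ≤ n → c * x ^ p ^ n ∈ bracketPow I (p ^ n)

/-- `λ_k((M/N)_j)`. -/
def quotPieceDim (k : Type*) {R M : Type*} [Field k] [CommRing R] [Algebra k R]
    [AddCommGroup M] [Module R M] [Module k M] [IsScalarTower k R M]
    (ℳ : ℤ → Submodule k M) (N : Submodule R M) (j : ℤ) : ℕ :=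
  Module.finrank k ((ℳ j).map (N.mkQ.restrictScalars k))

/-- `F_n(M,R,I,d)(y)`. -/
def FnGen (k : Type*) {R M : Type*} [Field k] [CommRing R] [Algebra k R]
    [AddCommGroup M] [Module R M] [Module k M] [IsScalarTower k R M]
    (ℳ : ℤ → Submodule k M) (I : Ideal R) (p d n : ℕ) (y : ℂ) : ℂ :=
  (1 / (p : ℂ) ^ n) ^ d *
    ∑' j : ℤ, (quotPieceDim k (R := R) ℳ (bracketPow I (p ^ n) • ⊤) j : ℂ) *
      Complex.exp (-Complex.I * y * (j : ℂ) / (p : ℂ) ^ n)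

/-!
Write `q = pⁿ`, and let `Sₙ(t)` be the dimension of the part of `R / I^{[q]}` of degree at most `t`.
Over a perfect field there is a Frobenius-semilinear map `R^{p^d} → R` whose image contains `c R`
for some `c` outside every minimal prime; it multiplies degrees by `p` up to a bounded error. As
`R / (c, I^{[q]})` has length `O(q^{d-1})`, the map gives the recursion
`Sₙ₊₁(p t + p - 1) ≤ p^d Sₙ(t + C) + O(q^{d-1})`, and base change to an algebraic closure gives it
over any field. Hence the functions `s ↦ q^{-d} Sₙ(q s)` decrease up to a summable error and a
summable shift of `s`, so they converge almost everywhere, and Abel summation turns this into the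
convergence of `Fₙ(R, R, I, d)(y)`.

If `I ⊆ J ⊆ I*`, a single `c` outside every minimal prime multiplies the `q`-th powers of the
generators of `J` into `I^{[q]}` for large `q`. So `J^{[q]} / I^{[q]}` is a quotient of a bounded
number of copies of `R / (c, I^{[q]})` and has length `O(q^{d-1})`, too little to change the limit.
-/

namespace FrobeniusPoincare

section Dimension

variable {k R : Type*} [Field k] [CommRing R] [Algebra k R] {d : ℕ}

lemma ringKrullDim_quotient_span_singleton_add_one_le {c : R} (hc : ∀ P ∈ minimalPrimes R, c ∉ P) :
    ringKrullDim (R ⧸ Ideal.span {c}) + 1 ≤ ringKrullDim R := by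
  rcases subsingleton_or_nontrivial (R ⧸ Ideal.span {c}) with _ | hnt
  · simp [ringKrullDim_eq_bot_of_subsingleton]
  have : Nontrivial R := (Ideal.Quotient.mk (Ideal.span {c})).domain_nontrivial
  rw [ringKrullDim, Order.krullDim_eq_iSup_length, ringKrullDim, Order.krullDim_eq_iSup_length,
    ← WithBot.coe_one, ← WithBot.coe_add, ENat.iSup_add, WithBot.coe_le_coe, iSup_le_iff]
  intro l
  let L : LTSeries (PrimeSpectrum R) := l.map (PrimeSpectrum.comap (Ideal.Quotient.mk _)) <|
    Monotone.strictMono_of_injective (fun _ _ h ↦ Ideal.comap_mono h) <|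
      PrimeSpectrum.comap_injective_of_surjective _ Ideal.Quotient.mk_surjective
  have hcL : c ∈ L.head.asIdeal := by
    change Ideal.Quotient.mk _ c ∈ l.head.asIdeal
    rw [Ideal.Quotient.mk_singleton_self]
    exact zero_mem _
  obtain ⟨P, hP, hPL⟩ := Ideal.exists_minimalPrimes_le (J := L.head.asIdeal) bot_le
  have hlt : (⟨P, hP.1.1⟩ : PrimeSpectrum R) < L.head :=
    lt_of_le_of_ne hPL fun h ↦ hc P hP (by rwa [← h] at hcL)
  refine le_trans ?_ (le_iSup _ (L.cons _ hlt))
  simp [L]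

lemma ringKrullDim_le_of_isIntegral {A B : Type*} [CommRing A] [CommRing B] [Algebra A B]
    [Algebra.IsIntegral A B] : ringKrullDim B ≤ ringKrullDim A :=
  Order.krullDim_le_of_strictMono (PrimeSpectrum.comap (algebraMap A B)) fun _ _ hPQ ↦
    Ideal.IsIntegral.comap_lt_comap hPQ

lemma ringKrullDim_le_of_isIntegral_of_injective {A B : Type*} [CommRing A] [CommRing B]
    [Algebra A B] [Algebra.IsIntegral A B] (hinj : Function.Injective (algebraMap A B)) :
    ringKrullDim A ≤ ringKrullDim B := by
  refine iSup_le fun l ↦ ?_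
  obtain ⟨Q, -, _, hQ⟩ := Ideal.exists_ideal_over_prime_of_isIntegral (S := B) l.head.asIdeal ⊥
    (by simp [← RingHom.ker_eq_comap_bot, (RingHom.injective_iff_ker_eq_bot _).mp hinj])
  have : Q.LiesOver l.head.asIdeal := ⟨hQ.symm⟩
  obtain ⟨L, hL, -, -⟩ := Ideal.exists_ltSeries_of_hasGoingUp l Q
  exact le_iSup_of_le L (by rw [hL])

lemma ringKrullDim_mvPolynomial_fin (k : Type*) [Field k] (d : ℕ) :
    ringKrullDim (MvPolynomial (Fin d) k) = d := by
  simp [MvPolynomial.ringKrullDim_of_isNoetherianRing, ringKrullDim_eq_zero_of_field]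

/-- Noether normalization, padded with redundant variables: injectivity is given up in exchange
for a number of variables that only depends on a bound for the dimension. -/
lemma exists_finite_algHom_mvPolynomial [Algebra.FiniteType k R] (hd : ringKrullDim R ≤ d) :
    ∃ g : MvPolynomial (Fin d) k →ₐ[k] R, g.Finite := by
  rcases subsingleton_or_nontrivial R with _ | _
  · exact ⟨Algebra.ofId k R |>.comp (MvPolynomial.aeval 0), .of_surjective _ fun x ↦
      ⟨0, Subsingleton.elim _ _⟩⟩
  obtain ⟨s, g, hg, hfin⟩ := exists_finite_inj_algHom_of_fg k R
  have hs : s ≤ d := by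
    algebraize [g.toRingHom]
    have : Module.Finite (MvPolynomial (Fin s) k) R := hfin
    have := (ringKrullDim_le_of_isIntegral_of_injective (B := R) hg).trans hd
    rw [ringKrullDim_mvPolynomial_fin] at this
    exact_mod_cast this
  refine ⟨g.comp (MvPolynomial.killCompl (Fin.castLE_injective hs)), hfin.comp ?_⟩
  exact .of_surjective _ fun f ↦ ⟨_, MvPolynomial.killCompl_rename_app _ f⟩

end Dimension

section FiniteAdjoin

open Polynomial

variable {k S : Type*} [Field k] [CommRing S] [Algebra k S]

lemma algHom_apply_mem_adjoin {σ : Type*} (φ : MvPolynomial σ k →ₐ[k] S) (f : MvPolynomial σ k) :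
    φ f ∈ Algebra.adjoin k (Set.range fun i ↦ φ (.X i)) := by
  rw [Algebra.adjoin_range_eq_range_aeval]
  exact ⟨f, (DFunLike.congr_fun (MvPolynomial.aeval_unique φ) f).symm⟩

lemma finrank_adjoin_singleton_le {y : S} {f : k[X]} (hf : f.Monic) (hy : aeval y f = 0) :
    Module.Finite k (Algebra.adjoin k {y}) ∧
      Module.finrank k (Algebra.adjoin k {y}) ≤ f.natDegree := by
  have hint : IsIntegral k y := ⟨f, hf, hy⟩
  refine ⟨(Algebra.adjoin.powerBasis hint).finite, ?_⟩
  rw [(Algebra.adjoin.powerBasis hint).finrank, Algebra.adjoin.powerBasis_dim]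
  exact natDegree_le_natDegree (minpoly.min k y hf hy)

lemma finrank_adjoin_image_le {ι : Type*} (y : ι → S) {m : ℕ}
    (hy : ∀ i, ∃ f : k[X], f.Monic ∧ f.natDegree ≤ m ∧ aeval (y i) f = 0) (s : Finset ι) :
    Module.Finite k (Algebra.adjoin k (y '' s)) ∧
      Module.finrank k (Algebra.adjoin k (y '' s)) ≤ m ^ s.card := by
  classical
  induction s using Finset.induction_on with
  | empty =>
    rw [Finset.coe_empty, Set.image_empty, Algebra.adjoin_empty]
    refine ⟨inferInstance, ?_⟩
    rcases subsingleton_or_nontrivial S with _ | _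
    · simp [Module.finrank_zero_of_subsingleton]
    · simp
  | insert i s hi ih =>
    obtain ⟨f, hf, hfm, hfy⟩ := hy i
    obtain ⟨_, hle⟩ := ih
    obtain ⟨_, hle'⟩ := finrank_adjoin_singleton_le hf hfy
    rw [Finset.coe_insert, Set.image_insert_eq, Set.insert_eq, Algebra.adjoin_union]
    refine ⟨Subalgebra.finite_sup _ _, (Subalgebra.finrank_sup_le_of_free _ _).trans ?_⟩
    rw [Finset.card_insert_of_notMem hi, pow_succ']
    exact Nat.mul_le_mul (hle'.trans hfm) hle

end FiniteAdjoin

section BracketPow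

variable {R S : Type*} [CommRing R] [CommRing S] {I J : Ideal R} {p : ℕ}

lemma pow_mem_bracketPow (q : ℕ) {x : R} (hx : x ∈ I) : x ^ q ∈ bracketPow I q :=
  Ideal.subset_span ⟨x, hx, rfl⟩

lemma bracketPow_mono (hIJ : I ≤ J) (q : ℕ) : bracketPow I q ≤ bracketPow J q :=
  Ideal.span_mono (Set.image_mono hIJ)

lemma bracketPow_eq_map [ExpChar R p] (I : Ideal R) (n : ℕ) :
    bracketPow I (p ^ n) = I.map (iterateFrobenius R p n) := rfl

lemma bracketPow_span [ExpChar R p] (s : Set R) (n : ℕ) :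
    bracketPow (Ideal.span s) (p ^ n) = Ideal.span ((· ^ p ^ n) '' s) := by
  rw [bracketPow_eq_map, Ideal.map_span]
  rfl

lemma map_bracketPow [ExpChar R p] [ExpChar S p] (f : R →+* S) (I : Ideal R) (n : ℕ) :
    (bracketPow I (p ^ n)).map f = bracketPow (I.map f) (p ^ n) := by
  rw [bracketPow_eq_map, bracketPow_eq_map, Ideal.map_map, Ideal.map_map,
    RingHom.iterateFrobenius_comm]

lemma map_bracketPow_of_surjective {f : R →+* S} (hf : Function.Surjective f) (I : Ideal R)
    (q : ℕ) : (bracketPow I q).map f = bracketPow (I.map f) q := by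
  have hI : (I.map f : Set S) = f '' I := by
    ext y
    exact Ideal.mem_map_iff_of_surjective f hf
  simp only [bracketPow, Ideal.map_span, hI, Set.image_image, map_pow]

end BracketPow

section HilbertKunz

open Polynomial

variable {k R : Type*} [Field k] [CommRing R] [Algebra k R] {d : ℕ}

lemma exists_monic_aeval_mem (I : Ideal R) [Module.Finite k (R ⧸ I)] (x : R) :
    ∃ f : k[X], f.Monic ∧ aeval x f ∈ I := by
  obtain ⟨f, hf, hfx⟩ := Algebra.IsIntegral.isIntegral (R := k) (Ideal.Quotient.mkₐ k I x)
  refine ⟨f, hf, Ideal.Quotient.eq_zero_iff_mem.mp ?_⟩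
  rw [← Ideal.Quotient.mkₐ_eq_mk k, ← aeval_algHom_apply]
  exact hfx

lemma exists_monic_aeval_mk_bracketPow_eq_zero (I : Ideal R) [Module.Finite k (R ⧸ I)] (x : R) :
    ∃ m : ℕ, ∀ q : ℕ, ∃ f : k[X], f.Monic ∧ f.natDegree ≤ m * q ∧
      aeval (Ideal.Quotient.mkₐ k (bracketPow I q) x) f = 0 := by
  obtain ⟨f, hf, hfx⟩ := exists_monic_aeval_mem (k := k) I x
  refine ⟨f.natDegree, fun q ↦ ⟨f ^ q, hf.pow q, by rw [hf.natDegree_pow, mul_comm], ?_⟩⟩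
  rw [aeval_algHom_apply, map_pow, Ideal.Quotient.mkₐ_eq_mk, Ideal.Quotient.eq_zero_iff_mem]
  exact pow_mem_bracketPow q hfx

lemma exists_finrank_quotient_bracketPow_le (I : Ideal R) [Module.Finite k (R ⧸ I)]
    [Algebra.FiniteType k R] (hd : ringKrullDim R ≤ d) :
    ∃ C : ℕ, ∀ q : ℕ, Module.Finite k (R ⧸ bracketPow I q) ∧
      Module.finrank k (R ⧸ bracketPow I q) ≤ C * q ^ d := by
  obtain ⟨g, hg⟩ := exists_finite_algHom_mvPolynomial (k := k) hd
  algebraize [g.toRingHom]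
  have : Module.Finite (MvPolynomial (Fin d) k) R := hg
  obtain ⟨e, z, hz⟩ := Module.Finite.exists_fin (R := MvPolynomial (Fin d) k) (M := R)
  choose m hm using fun i ↦ exists_monic_aeval_mk_bracketPow_eq_zero (k := k) I (g (.X i))
  let M := Finset.univ.sup m
  refine ⟨e * M ^ d, fun q ↦ ?_⟩
  let π := Ideal.Quotient.mkₐ k (bracketPow I q)
  let A := Algebra.adjoin k ((fun i ↦ π (g (.X i))) '' (Finset.univ : Finset (Fin d)))
  obtain ⟨_, hA⟩ : Module.Finite k A ∧ Module.finrank k A ≤ (M * q) ^ d := by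
    refine (Finset.card_fin d) ▸ finrank_adjoin_image_le _ (fun i ↦ ?_) Finset.univ
    obtain ⟨f, hf, hfm, hf0⟩ := hm i q
    exact ⟨f, hf, hfm.trans (Nat.mul_le_mul_right q (Finset.le_sup (Finset.mem_univ i))), hf0⟩
  have hgA (f : MvPolynomial (Fin d) k) : π (g f) ∈ A := by
    rw [show A = Algebra.adjoin k (Set.range fun i ↦ π (g (.X i))) by
      rw [← Set.image_univ, ← Finset.coe_univ]]
    exact algHom_apply_mem_adjoin (π.comp g) f
  let Φ := (Fintype.linearCombination A (π ∘ z)).restrictScalars k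
  have hΦ : Function.Surjective Φ := fun x ↦ by
    obtain ⟨r, rfl⟩ := Ideal.Quotient.mk_surjective x
    obtain ⟨a, rfl⟩ := (Submodule.mem_span_range_iff_exists_fun _).mp
      (hz ▸ Submodule.mem_top (x := r))
    refine ⟨fun j ↦ ⟨π (g (a j)), hgA _⟩, ?_⟩
    simp only [Φ, LinearMap.restrictScalars_apply, Fintype.linearCombination_apply,
      Function.comp_apply, Subalgebra.smul_def, smul_eq_mul, ← map_mul, ← map_sum]
    rfl
  have := Module.Finite.of_surjective Φ hΦ
  refine ⟨this, (LinearMap.finrank_le_finrank_of_surjective hΦ).trans ?_⟩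
  rw [Module.finrank_pi_fintype, Finset.sum_const, Finset.card_fin, smul_eq_mul, mul_assoc,
    ← mul_pow]
  exact Nat.mul_le_mul_left e hA

lemma exists_mul_finrank_quotient_sup_bracketPow_le (I : Ideal R) [Module.Finite k (R ⧸ I)]
    [Algebra.FiniteType k R] (hd : ringKrullDim R ≤ d) {c : R}
    (hc : ∀ P ∈ minimalPrimes R, c ∉ P) :
    ∃ C : ℕ, ∀ q : ℕ, q * Module.finrank k (R ⧸ Ideal.span {c} ⊔ bracketPow I q) ≤ C * q ^ d := by
  have hdim := (ringKrullDim_quotient_span_singleton_add_one_le hc).trans hd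
  rcases subsingleton_or_nontrivial (R ⧸ Ideal.span {c}) with h | _
  · rw [Ideal.Quotient.subsingleton_iff] at h
    refine ⟨0, fun q ↦ ?_⟩
    have : Subsingleton (R ⧸ Ideal.span {c} ⊔ bracketPow I q) := by
      rw [Ideal.Quotient.subsingleton_iff, h, top_sup_eq]
    rw [Module.finrank_zero_of_subsingleton, mul_zero]
    exact Nat.zero_le _
  obtain ⟨e, rfl⟩ : ∃ e, d = e + 1 := by
    refine Nat.exists_eq_succ_of_ne_zero fun h0 ↦ ?_
    have := (add_le_add_left ringKrullDim_nonneg_of_nontrivial 1).trans hdim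
    rw [h0, Nat.cast_zero, zero_add] at this
    exact this.not_gt zero_lt_one
  let π := Ideal.Quotient.mkₐ k (Ideal.span {c})
  have hπ : Function.Surjective π := Ideal.Quotient.mkₐ_surjective k _
  have : Module.Finite k ((R ⧸ Ideal.span {c}) ⧸ I.map π) :=
    .of_surjective (Ideal.quotientMapₐ (I.map π) π Ideal.le_comap_map).toLinearMap
      (Ideal.quotientMap_surjective (H := Ideal.le_comap_map) hπ)
  obtain ⟨C, hC⟩ := exists_finrank_quotient_bracketPow_le (k := k) (I.map π) (d := e)
    (ENat.WithBot.add_le_add_one_right_iff.mp (mod_cast hdim))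
  refine ⟨C, fun q ↦ ?_⟩
  have hfin :=
    (DoubleQuot.quotQuotEquivQuotSupₐ k (.span {c}) (bracketPow I q)).toLinearEquiv.finrank_eq
  rw [← hfin, pow_succ', mul_left_comm]
  have : (bracketPow I q).map π = bracketPow (I.map π) q := map_bracketPow_of_surjective hπ I q
  exact Nat.mul_le_mul_left q (this ▸ (hC q).2)

end HilbertKunz

section FrobeniusDegree

open Module

lemma exists_span_range_eq_top_of_finrank_le {K V : Type*} [Field K] [AddCommGroup V] [Module K V]
    [Module.Finite K V] {n : ℕ} (hn : finrank K V ≤ n) :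
    ∃ v : Fin n → V, Submodule.span K (Set.range v) = ⊤ := by
  let b := finBasis K V
  refine ⟨Function.extend (Fin.castLE hn) b 0, eq_top_iff.mpr (b.span_eq ▸ Submodule.span_mono ?_)⟩
  rintro _ ⟨i, rfl⟩
  exact ⟨Fin.castLE hn i, (Fin.castLE_injective hn).extend_apply b 0 i⟩

variable {K κ : Type*} [Field K] [Field κ] [Algebra K κ] {d : ℕ} (p : ℕ) [ExpChar κ p]

lemma map_frobenius_le (L : Subfield κ) : L.map (frobenius κ p) ≤ L := by
  rintro _ ⟨x, hx, rfl⟩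
  exact pow_mem hx p

lemma finrank_fieldRange_frobenius (L : Subfield κ) [FiniteDimensional L κ] :
    finrank (frobenius κ p).fieldRange κ = (L.map (frobenius κ p)).relfinrank L := by
  have hLp := map_frobenius_le p L
  have hLκ : L.map (frobenius κ p) ≤ (frobenius κ p).fieldRange := by
    rw [RingHom.fieldRange_eq_map]
    exact Set.image_mono (Set.subset_univ _)
  have hmap : (L.map (frobenius κ p)).relfinrank (frobenius κ p).fieldRange = finrank L κ := by
    rw [RingHom.fieldRange_eq_map, Subfield.relfinrank_map_map, Subfield.relfinrank_top_right]
  have htower := (Subfield.relfinrank_mul_finrank_top hLp).trans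
    (Subfield.relfinrank_mul_finrank_top hLκ).symm
  rw [hmap, mul_comm] at htower
  exact (Nat.eq_of_mul_eq_mul_left finrank_pos htower).symm

lemma exists_eq_sum_pow_mul_monomial [ExpChar K p] [PerfectRing K p] (f : MvPolynomial (Fin d) K) :
    ∃ g : (Fin d → Fin p) → MvPolynomial (Fin d) K, f = ∑ β, g β ^ p * ∏ i, .X i ^ (β i : ℕ) := by
  have hp : 0 < p := expChar_pos K p
  induction f using MvPolynomial.induction_on' with
  | add f₁ f₂ h₁ h₂ =>
    obtain ⟨g₁, hg₁⟩ := h₁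
    obtain ⟨g₂, hg₂⟩ := h₂
    refine ⟨g₁ + g₂, ?_⟩
    simp only [Pi.add_apply, add_pow_expChar, add_mul, Finset.sum_add_distrib, ← hg₁, ← hg₂]
  | monomial α a =>
    obtain ⟨b, rfl⟩ := surjective_frobenius K p a
    let r (i : Fin d) : Fin p := ⟨α i % p, Nat.mod_lt _ hp⟩
    refine ⟨Pi.single r (.C b * ∏ i, .X i ^ (α i / p)), ?_⟩
    rw [Finset.sum_eq_single r (fun β _ hβ ↦ by simp [hβ, hp.ne']) (by simp), Pi.single_eq_same,
      mul_pow, mul_assoc, ← Finset.prod_pow, ← Finset.prod_mul_distrib, ← MvPolynomial.C_pow,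
      ← frobenius_def, MvPolynomial.monomial_eq, Finsupp.prod_fintype _ _ fun _ ↦ pow_zero _]
    simp only [← pow_mul, ← pow_add, r, Nat.div_add_mod']

lemma mem_span_map_frobenius [ExpChar K p] [PerfectRing K p] (y : Fin d → κ) {x : κ}
    (hx : x ∈ IntermediateField.adjoin K (Set.range y)) :
    x ∈ Submodule.span ((IntermediateField.adjoin K (Set.range y)).toSubfield.map (frobenius κ p))
      (Set.range fun β : Fin d → Fin p ↦ ∏ i, y i ^ (β i : ℕ)) := by
  obtain ⟨a, b, rfl⟩ := (IntermediateField.mem_adjoin_range_iff K y x).mp hx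
  rcases eq_or_ne (MvPolynomial.aeval y b) 0 with hb | hb
  · rw [hb, div_zero]
    exact zero_mem _
  obtain ⟨g, hg⟩ := exists_eq_sum_pow_mul_monomial p (a * b ^ (p - 1))
  have hsum : MvPolynomial.aeval y a / MvPolynomial.aeval y b =
      ∑ β, (MvPolynomial.aeval y (g β) / MvPolynomial.aeval y b) ^ p * ∏ i, y i ^ (β i : ℕ) := by
    have := congrArg (MvPolynomial.aeval y) hg
    simp only [map_mul, map_pow, map_sum, map_prod, MvPolynomial.aeval_X] at this
    simp only [div_pow, div_mul_eq_mul_div, ← Finset.sum_div, ← this]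
    rw [div_eq_div_iff hb (pow_ne_zero p hb), mul_assoc, ← pow_succ,
      Nat.sub_add_cancel (expChar_pos K p)]
  rw [hsum]
  refine Submodule.sum_mem _ fun β _ ↦ Submodule.smul_mem _
    (⟨_, Subfield.mem_map.mpr ⟨_, ?_, rfl⟩⟩ : (IntermediateField.adjoin K
      (Set.range y)).toSubfield.map (frobenius κ p)) (Submodule.subset_span ⟨β, rfl⟩)
  exact (IntermediateField.mem_adjoin_range_iff K y _).mpr ⟨g β, b, rfl⟩

lemma finrank_fieldRange_frobenius_le [ExpChar K p] [PerfectRing K p] (y : Fin d → κ)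
    [FiniteDimensional (IntermediateField.adjoin K (Set.range y)) κ] :
    Module.Finite (frobenius κ p).fieldRange κ ∧
      finrank (frobenius κ p).fieldRange κ ≤ p ^ d := by
  let L := (IntermediateField.adjoin K (Set.range y)).toSubfield
  have : FiniteDimensional L κ := ‹_›
  have hLp := map_frobenius_le p L
  let m (β : Fin d → Fin p) : κ := ∏ i, y i ^ (β i : ℕ)
  have hle : (Subfield.extendScalars hLp).toSubmodule ≤
      Submodule.span (L.map (frobenius κ p)) (Set.range m) :=
    fun x hx ↦ mem_span_map_frobenius p y hx
  have : Module.Finite (L.map (frobenius κ p)) (Submodule.span (L.map (frobenius κ p))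
    (Set.range m)) := .span_of_finite _ (Set.finite_range m)
  have : Module.Finite (L.map (frobenius κ p)) (Subfield.extendScalars hLp) :=
    Submodule.finiteDimensional_of_le hle
  have hrank := finrank_fieldRange_frobenius p L
  rw [Subfield.relfinrank_eq_finrank_of_le hLp] at hrank
  refine ⟨Module.finite_of_finrank_pos (hrank ▸ finrank_pos), hrank ▸ ?_⟩
  refine (Submodule.finrank_mono hle).trans ((finrank_range_le_card m).trans ?_)
  simp

end FrobeniusDegree

section LocalizedNormalization

lemma intermediateField_eq_top_of_isLocalization {A L κ : Type*} [CommRing A] [Field L] [Field κ]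
    [Algebra A κ] [Algebra L κ] (S : Submonoid A) [IsLocalization S κ] {E : IntermediateField L κ}
    (hE : ∀ a, algebraMap A κ a ∈ E) : E = ⊤ := by
  refine eq_top_iff.mpr fun x _ ↦ ?_
  obtain ⟨a, s, rfl⟩ := IsLocalization.exists_mk'_eq S x
  rw [IsLocalization.mk'_eq_iff_eq_mul.mpr (div_mul_cancel₀ _
    (IsLocalization.map_units κ s).ne_zero).symm]
  exact div_mem (hE a) (hE s)

lemma finiteDimensional_adjoin_of_isLocalization {K A : Type*} [Field K] [CommRing A] [Algebra K A]
    {d : ℕ} (g : MvPolynomial (Fin d) K →ₐ[K] A) (hg : g.Finite) (S : Submonoid A) (κ : Type*)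
    [Field κ] [Algebra K κ] [Algebra A κ] [IsScalarTower K A κ] [IsLocalization S κ] :
    FiniteDimensional
      (IntermediateField.adjoin K (Set.range fun i ↦ algebraMap A κ (g (.X i)))) κ := by
  let L := IntermediateField.adjoin K (Set.range fun i ↦ algebraMap A κ (g (.X i)))
  have hgL (f : MvPolynomial (Fin d) K) : algebraMap A κ (g f) ∈ L :=
    IntermediateField.algebra_adjoin_le_adjoin K _
      (algHom_apply_mem_adjoin ((IsScalarTower.toAlgHom K A κ).comp g) f)
  have hint (a : A) : IsIntegral L (algebraMap A κ a) := by
    obtain ⟨f, hf, hfa⟩ := hg.to_isIntegral a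
    refine ⟨f.map ((((algebraMap A κ).comp g.toRingHom).codRestrict L.toSubring hgL)),
      hf.map _, ?_⟩
    rw [Polynomial.eval₂_map]
    exact (Polynomial.hom_eval₂ f g.toRingHom (algebraMap A κ) a).symm.trans
      (by rw [hfa, map_zero])
  algebraize [g.toRingHom]
  have : Module.Finite (MvPolynomial (Fin d) K) A := hg
  obtain ⟨n, z, hz⟩ := Module.Finite.exists_fin (R := MvPolynomial (Fin d) K) (M := A)
  let E := IntermediateField.adjoin L (Set.range fun j ↦ algebraMap A κ (z j))
  have hfin : FiniteDimensional L E :=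
    IntermediateField.finiteDimensional_adjoin <| by
      rintro _ ⟨j, rfl⟩
      exact hint (z j)
  have hE (a : A) : algebraMap A κ a ∈ E := by
    obtain ⟨c, rfl⟩ := (Submodule.mem_span_range_iff_exists_fun _).mp
      (hz ▸ Submodule.mem_top (x := a))
    rw [map_sum]
    refine sum_mem fun j _ ↦ ?_
    rw [Algebra.smul_def, map_mul]
    exact mul_mem (IntermediateField.algebraMap_mem _ (⟨_, hgL (c j)⟩ : L))
      (IntermediateField.subset_adjoin L _ ⟨j, rfl⟩)
  have htop : E = ⊤ := intermediateField_eq_top_of_isLocalization S hE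
  exact (htop ▸ IntermediateField.topEquiv (F := L) (E := κ)).toLinearEquiv.finiteDimensional

end LocalizedNormalization

section GenericFrobenius

lemma exists_forall_eq_sum_of_finite {A B : Type*} [CommRing A] [CommRing B] {f : A →+* B}
    (hf : f.Finite) : ∃ (n : ℕ) (w : Fin n → B), ∀ b, ∃ a : Fin n → A, b = ∑ i, f (a i) * w i := by
  algebraize [f]
  obtain ⟨n, w, hw⟩ := Module.Finite.exists_fin (R := A) (M := B)
  refine ⟨n, w, fun b ↦ ?_⟩
  obtain ⟨a, ha⟩ := (Submodule.mem_span_range_iff_exists_fun _).mp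
    (hw ▸ Submodule.mem_top (x := b))
  exact ⟨a, ha.symm.trans (by simp only [Algebra.smul_def]; rfl)⟩

variable {A : Type*} [CommRing A] {p : ℕ} {ι : Type*} [Fintype ι]

lemma exists_pow_mul_eq_sum_of_span_eq_top (S : Submonoid A) {κ : Type*} [Field κ] [ExpChar κ p]
    [Algebra A κ] [IsLocalization S κ] {v : ι → κ}
    (hv : Submodule.span (frobenius κ p).fieldRange (Set.range v) = ⊤) :
    ∃ g : ι → A, ∀ b, ∃ c ∈ S, ∃ a : ι → A, c ^ p * b = ∑ i, a i ^ p * g i := by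
  have hp : p ≠ 0 := expChar_ne_zero κ p
  obtain ⟨t, ht⟩ := IsLocalization.exist_integer_multiples_of_finite S v
  choose w hw using ht
  refine ⟨fun i ↦ t ^ (p - 1) * w i, fun b ↦ ?_⟩
  obtain ⟨β, hβ⟩ : ∃ β : ι → κ, algebraMap A κ b = ∑ i, β i ^ p * v i := by
    obtain ⟨α, hα⟩ := (Submodule.mem_span_range_iff_exists_fun _).mp
      (hv ▸ Submodule.mem_top (x := algebraMap A κ b))
    choose β hβ using fun i ↦ (α i).2
    exact ⟨β, by simp only [← hα, ← frobenius_def, hβ]; rfl⟩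
  obtain ⟨s, hs⟩ := IsLocalization.exist_integer_multiples_of_finite S β
  choose a ha using hs
  have key : algebraMap A κ ((s * t) ^ p * b) =
      algebraMap A κ (∑ i, a i ^ p * (t ^ (p - 1) * w i)) := by
    simp only [map_mul, map_pow, map_sum, hβ, ha, hw, Algebra.smul_def, Finset.mul_sum]
    refine Finset.sum_congr rfl fun i _ ↦ ?_
    rw [mul_pow, mul_pow, ← pow_sub_one_mul hp (algebraMap A κ t)]
    ring
  obtain ⟨u, hu⟩ := IsLocalization.exists_of_eq (M := S) key
  refine ⟨u * (s * t), (u * (s * t)).2, fun i ↦ u * a i, ?_⟩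
  calc ((u : A) * (s * t)) ^ p * b = u ^ (p - 1) * (u * ((s * t) ^ p * b)) := by
        rw [mul_pow, ← pow_sub_one_mul hp (u : A)]; ring
    _ = ∑ i, (u * a i) ^ p * (t ^ (p - 1) * w i) := by
        rw [hu, Finset.mul_sum, Finset.mul_sum]
        refine Finset.sum_congr rfl fun i _ ↦ ?_
        rw [mul_pow, ← pow_sub_one_mul hp (u : A)]; ring

lemma exists_forall_pow_mul_eq_sum [ExpChar A p] (hA : (frobenius A p).Finite) {S : Submonoid A}
    {g : ι → A} (hg : ∀ b, ∃ c ∈ S, ∃ a : ι → A, c ^ p * b = ∑ i, a i ^ p * g i) :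
    ∃ c ∈ S, ∀ b, ∃ a : ι → A, c ^ p * b = ∑ i, a i ^ p * g i := by
  classical
  obtain ⟨n, w, hw⟩ := exists_forall_eq_sum_of_finite hA
  choose c hcS a ha using fun j ↦ hg (w j)
  refine ⟨∏ j, c j, prod_mem fun j _ ↦ hcS j, fun b ↦ ?_⟩
  obtain ⟨b, rfl⟩ := hw b
  choose e he using fun j ↦ Finset.dvd_prod_of_mem c (Finset.mem_univ j)
  refine ⟨fun i ↦ ∑ j, b j * e j * a j i, ?_⟩
  calc (∏ j, c j) ^ p * ∑ j, frobenius A p (b j) * w j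
      = ∑ j, (b j * e j) ^ p * (c j ^ p * w j) := by
        rw [Finset.mul_sum]
        refine Finset.sum_congr rfl fun j _ ↦ ?_
        rw [he j, frobenius_def]; ring
    _ = ∑ i, (∑ j, b j * e j * a j i) ^ p * g i := by
        simp only [ha, sum_pow_char, Finset.mul_sum, Finset.sum_mul]
        rw [Finset.sum_comm]
        refine Finset.sum_congr rfl fun i _ ↦ Finset.sum_congr rfl fun j _ ↦ ?_
        ring

lemma isIntegral_of_forall_apply_eq_pow {f : A →+* A} {m : ℕ} (hm : m ≠ 0)
    (hf : ∀ x, f x = x ^ m) : f.IsIntegral := by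
  intro x
  have hmonic := Polynomial.monic_X_pow_sub_C x hm
  refine ⟨Polynomial.X ^ m - Polynomial.C x, hmonic, ?_⟩
  rw [Polynomial.eval₂_sub, Polynomial.eval₂_X_pow, Polynomial.eval₂_C, hf, sub_self]

lemma finite_iterateFrobenius (K : Type*) [Field K] [Algebra K A] [Algebra.FiniteType K A]
    [ExpChar K p] [PerfectRing K p] [ExpChar A p] (n : ℕ) : (iterateFrobenius A p n).Finite := by
  have hint : (iterateFrobenius A p n).IsIntegral :=
    isIntegral_of_forall_apply_eq_pow (pow_ne_zero n (expChar_ne_zero A p))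
      (iterateFrobenius_def p n)
  refine hint.to_finite ?_
  refine RingHom.FiniteType.of_comp_finiteType (f := algebraMap K A) ?_
  rw [← RingHom.iterateFrobenius_comm]
  exact (RingHom.finiteType_algebraMap.mpr ‹_›).comp <| .of_surjective _ <|
    (bijective_iterateFrobenius K p n).2

lemma exists_generators_at_minimalPrime (K : Type*) [Field K] [Algebra K A]
    [Algebra.FiniteType K A] [ExpChar K p] [PerfectRing K p] [ExpChar A p] [IsReduced A] {d : ℕ}
    (hd : ringKrullDim A ≤ d) {P : Ideal A} (hP : P ∈ minimalPrimes A) :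
    ∃ g : Fin (p ^ d) → A, ∃ c ∉ P, ∀ b, ∃ a : Fin (p ^ d) → A, c ^ p * b = ∑ i, a i ^ p * g i := by
  have := hP.1.1
  have := Ring.KrullDimLE.of_isLocalization P hP (Localization.AtPrime P)
  let _ : Field (Localization.AtPrime P) := Ring.KrullDimLE.isField_of_isReduced.toField
  have := expChar_of_injective_algebraMap (algebraMap K (Localization.AtPrime P)).injective p
  obtain ⟨f, hf⟩ := exists_finite_algHom_mvPolynomial (k := K) hd
  have := finiteDimensional_adjoin_of_isLocalization f hf P.primeCompl (Localization.AtPrime P)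
  obtain ⟨_, hle⟩ := finrank_fieldRange_frobenius_le (K := K) p
    (fun i ↦ algebraMap A (Localization.AtPrime P) (f (.X i)))
  obtain ⟨v, hv⟩ := exists_span_range_eq_top_of_finrank_le hle
  obtain ⟨g, hg⟩ := exists_pow_mul_eq_sum_of_span_eq_top P.primeCompl hv
  have hA : (frobenius A p).Finite := iterateFrobenius_one A p ▸ finite_iterateFrobenius K 1
  exact ⟨g, exists_forall_pow_mul_eq_sum hA hg⟩

lemma exists_comp_eq_smul_id_of_isLocalizedModule (S : Submonoid A) {M N M' N' : Type*}
    [AddCommGroup M] [AddCommGroup N] [AddCommGroup M'] [AddCommGroup N'] [Module A M] [Module A N]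
    [Module A M'] [Module A N'] [Module.FinitePresentation A M] [Module.FinitePresentation A N]
    (f : M →ₗ[A] M') (g : N →ₗ[A] N') [IsLocalizedModule S f] [IsLocalizedModule S g]
    (e : M' ≃ₗ[A] N') :
    ∃ (h : M →ₗ[A] N) (h' : N →ₗ[A] M), ∃ s ∈ S,
      h ∘ₗ h' = s • LinearMap.id ∧ h' ∘ₗ h = s • LinearMap.id := by
  obtain ⟨h, s, hs⟩ := Module.FinitePresentation.exists_lift_of_isLocalizedModule S g
    (e.toLinearMap ∘ₗ f)
  obtain ⟨h', t, ht⟩ := Module.FinitePresentation.exists_lift_of_isLocalizedModule S f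
    (e.symm.toLinearMap ∘ₗ g)
  have hs' (x : M) : g (h x) = s • e (f x) := LinearMap.congr_fun hs x
  have ht' (x : N) : f (h' x) = t • e.symm (g x) := LinearMap.congr_fun ht x
  obtain ⟨u, hu⟩ := Module.Finite.exists_smul_of_comp_eq_of_isLocalizedModule S g
    (h ∘ₗ h') ((s * t) • LinearMap.id) <| LinearMap.ext fun x ↦ by
      simp [hs', ht', Submonoid.smul_def, mul_smul]
  obtain ⟨v, hv⟩ := Module.Finite.exists_smul_of_comp_eq_of_isLocalizedModule S f
    (h' ∘ₗ h) ((s * t) • LinearMap.id) <| LinearMap.ext fun x ↦ by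
      simp [hs', ht', Submonoid.smul_def, mul_smul, smul_comm (s : A) (t : A)]
  refine ⟨((u : A) * v) • h, h', u * v * (s * t), mul_mem (mul_mem u.2 v.2) (mul_mem s.2 t.2), ?_,
    ?_⟩
  · ext x
    have := LinearMap.congr_fun hu x
    simp only [Submonoid.smul_def, LinearMap.smul_apply, LinearMap.comp_apply, LinearMap.id_apply,
      Submonoid.coe_mul] at this ⊢
    rw [mul_comm (u : A), mul_smul, this, smul_smul, smul_smul]
  · ext x
    have := LinearMap.congr_fun hv x
    simp only [Submonoid.smul_def, LinearMap.smul_apply, LinearMap.comp_apply, LinearMap.id_apply,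
      Submonoid.coe_mul, map_smul] at this ⊢
    rw [mul_smul, this, smul_smul, smul_smul]

lemma exists_semilinear_of_comp_eq_smul_id [ExpChar A p] {M τ : Type*} [AddCommGroup M] [Module A M]
    {h : M →ₗ[A] τ → A} {h' : (τ → A) →ₗ[A] M} {s : A} (hhh' : h ∘ₗ h' = s • LinearMap.id)
    (hh'h : h' ∘ₗ h = s • LinearMap.id) {g : ι → A} {c : A}
    (hg : ∀ b, ∃ a : ι → A, c ^ p * b = ∑ i, a i ^ p * g i) :
    ∃ f : (ι → M) →ₛₗ[frobenius A p] M, ∀ x, ∃ z, f z = (s ^ (p + 1) * c ^ p) • x := by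
  let f : (ι → M) →ₛₗ[frobenius A p] M :=
    { toFun := fun z ↦ h' fun l ↦ ∑ i, h (z i) l ^ p * g i
      map_add' := fun z w ↦ by
        rw [← map_add]
        congr 1
        ext l
        simp only [Pi.add_apply, map_add, add_pow_expChar, add_mul, Finset.sum_add_distrib]
      map_smul' := fun a z ↦ by
        rw [← map_smul]
        congr 1
        ext l
        simp only [Pi.smul_apply, map_smul, smul_eq_mul, mul_pow, Finset.mul_sum, frobenius_def,
          mul_assoc] }
  refine ⟨f, fun x ↦ ?_⟩
  choose a ha using fun l ↦ hg (h x l)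
  have hz (i : ι) (l : τ) : h (h' fun l ↦ a l i) l = s * a l i :=
    congr_fun (LinearMap.congr_fun hhh' _) l
  refine ⟨fun i ↦ h' fun l ↦ a l i, ?_⟩
  calc h' (fun l ↦ ∑ i, h (h' fun l ↦ a l i) l ^ p * g i) = h' ((s ^ p * c ^ p) • h x) := by
        congr 1
        ext l
        simp only [hz, mul_pow, Pi.smul_apply, smul_eq_mul, mul_assoc, ha, Finset.mul_sum]
    _ = (s ^ (p + 1) * c ^ p) • x := by
        rw [map_smul, ← LinearMap.comp_apply, hh'h, LinearMap.smul_apply, LinearMap.id_apply,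
          smul_smul]
        congr 1
        ring

lemma exists_semilinear_at_minimalPrime [IsReduced A] [IsNoetherianRing A] [ExpChar A p]
    {M : Type*} [AddCommGroup M] [Module A M] [Module.Finite A M] {P : Ideal A}
    (hP : P ∈ minimalPrimes A)
    (hg : ∃ g : ι → A, ∃ c ∉ P, ∀ b, ∃ a : ι → A, c ^ p * b = ∑ i, a i ^ p * g i) :
    ∃ f : (ι → M) →ₛₗ[frobenius A p] M, ∃ c ∉ P, ∀ x, ∃ z, f z = c • x := by
  have := hP.1.1
  have := Ring.KrullDimLE.of_isLocalization P hP (Localization.AtPrime P)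
  let _ : Field (Localization.AtPrime P) := Ring.KrullDimLE.isField_of_isReduced.toField
  have := Module.finitePresentation_of_finite A M
  have : Module.Finite (Localization.AtPrime P) (LocalizedModule P.primeCompl M) := inferInstance
  let b := Module.finBasis (Localization.AtPrime P) (LocalizedModule P.primeCompl M)
  obtain ⟨h, h', s, hs, hhh', hh'h⟩ := exists_comp_eq_smul_id_of_isLocalizedModule P.primeCompl
    (LocalizedModule.mkLinearMap P.primeCompl M)
    (LinearMap.pi fun i ↦ (Algebra.linearMap A (Localization.AtPrime P)) ∘ₗ LinearMap.proj i)
    (b.equivFun.restrictScalars A)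
  obtain ⟨g, c, hc, hgc⟩ := hg
  obtain ⟨f, hf⟩ := exists_semilinear_of_comp_eq_smul_id hhh' hh'h hgc
  exact ⟨f, s ^ (p + 1) * c ^ p,
    Submonoid.mul_mem P.primeCompl (pow_mem hs _) (pow_mem hc _), hf⟩

lemma exists_notMem_forall_mem_of_mem_minimalPrimes [IsNoetherianRing A] {P : Ideal A}
    (hP : P ∈ minimalPrimes A) : ∃ s ∉ P, ∀ Q ∈ minimalPrimes A, Q ≠ P → s ∈ Q := by
  have hfin := minimalPrimes.finite_of_isNoetherianRing A
  by_contra! h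
  have hle : (hfin.toFinset.erase P).inf id ≤ P := fun s hs ↦ by
    by_contra hsP
    obtain ⟨Q, hQ, hQP, hsQ⟩ := h s hsP
    exact hsQ ((Finset.inf_le (Finset.mem_erase.mpr ⟨hQP, hfin.mem_toFinset.mpr hQ⟩) :
      (hfin.toFinset.erase P).inf id ≤ Q) hs)
  obtain ⟨Q, hQ, hQP⟩ := (hP.1.1.inf_le').mp hle
  obtain ⟨hne, hQ⟩ := Finset.mem_erase.mp hQ
  rw [minimalPrimes_eq_minimals] at hP
  exact hne (hP.eq_of_le (hfin.mem_toFinset.mp hQ).1.1 hQP)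

/-- Semilinear maps that are generically surjective at each minimal prime glue to one map, because
elements `s P` vanishing at all minimal primes but `P` are orthogonal in a reduced ring. -/
lemma exists_semilinear_generically_surjective [IsReduced A] [IsNoetherianRing A] [ExpChar A p]
    {M N : Type*} [AddCommGroup M] [Module A M] [AddCommGroup N] [Module A N]
    (h : ∀ P ∈ minimalPrimes A, ∃ f : N →ₛₗ[frobenius A p] M, ∃ c ∉ P, ∀ x, ∃ z, f z = c • x) :
    ∃ f : N →ₛₗ[frobenius A p] M, ∃ c, (∀ P ∈ minimalPrimes A, c ∉ P) ∧ ∀ x, ∃ z, f z = c • x := by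
  have := (minimalPrimes.finite_of_isNoetherianRing A).fintype
  choose f c hc hf using fun P : minimalPrimes A ↦ h P P.2
  choose s hsP hsQ using fun P : minimalPrimes A ↦ exists_notMem_forall_mem_of_mem_minimalPrimes P.2
  have hbot : sInf (minimalPrimes A) = ⊥ := Ideal.sInf_minimalPrimes.trans (nilradical_eq_zero A)
  have hss {P Q : minimalPrimes A} (hPQ : P ≠ Q) : s P * s Q = 0 := by
    rw [← Ideal.mem_bot, ← hbot, Submodule.mem_sInf]
    intro Q' hQ'
    by_cases hne : Q' = P
    · exact Ideal.mul_mem_left Q' _ (hsQ Q Q' hQ' (hne ▸ Subtype.coe_ne_coe.mpr hPQ))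
    · exact Ideal.mul_mem_right _ Q' (hsQ P Q' hQ' hne)
  refine ⟨∑ P, s P • f P, ∑ P, s P ^ (p + 1) * c P, fun P hP hmem ↦ ?_, fun x ↦ ?_⟩
  · have := hP.1.1
    let P' : minimalPrimes A := ⟨P, hP⟩
    rw [← Finset.add_sum_erase _ _ (Finset.mem_univ P'), Ideal.add_mem_iff_left] at hmem
    · exact Submonoid.mul_mem P.primeCompl (pow_mem (hsP P') _) (hc P') hmem
    · refine sum_mem fun Q hQ ↦ P.mul_mem_right _ (P.pow_mem_of_mem ?_ _ p.succ_pos)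
      exact hsQ Q P hP (Subtype.coe_ne_coe.mpr (Finset.ne_of_mem_erase hQ).symm)
  choose z hz using fun P ↦ hf P x
  refine ⟨∑ P, s P • z P, ?_⟩
  simp only [LinearMap.sum_apply, LinearMap.smul_apply, map_sum, map_smulₛₗ, frobenius_def,
    Finset.sum_smul]
  refine Finset.sum_congr rfl fun P _ ↦ ?_
  rw [Finset.smul_sum, Finset.sum_eq_single P, hz, smul_smul, smul_smul, pow_succ]
  · intro Q _ hQP
    have h0 : s P ^ p * s Q = 0 := by
      rw [← pow_sub_one_mul (expChar_ne_zero A p), mul_assoc, hss hQP.symm, mul_zero]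
    rw [smul_smul, h0, zero_smul]
  · exact fun hP ↦ absurd (Finset.mem_univ P) hP

lemma exists_iterateFrobenius_eq_zero_of_mem_nilradical (R : Type*) [CommRing R]
    [IsNoetherianRing R] [ExpChar R p] (hp : p.Prime) :
    ∃ e, ∀ x ∈ nilradical R, iterateFrobenius R p e x = 0 := by
  obtain ⟨m, hm⟩ := IsNoetherianRing.isNilpotent_nilradical R
  refine ⟨m, fun x hx ↦ pow_eq_zero_of_le (m.lt_pow_self hp.one_lt).le ?_⟩
  rw [← Ideal.mem_bot, ← Ideal.zero_eq_bot, ← hm]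
  exact Ideal.pow_mem_pow hx m

lemma exists_comap_mk_nilradical_eq_of_mem_minimalPrimes {P : Ideal A} (hP : P ∈ minimalPrimes A) :
    ∃ Q ∈ minimalPrimes (A ⧸ nilradical A), Q.comap (Ideal.Quotient.mk (nilradical A)) = P := by
  have := (Ideal.radical_minimalPrimes (I := (⊥ : Ideal A))).ge hP
  rwa [Ideal.minimalPrimes_eq_comap] at this

theorem exists_frobenius_semilinear_generically_surjective (K : Type*) {R : Type*} [Field K]
    [CommRing R] [Nontrivial R] [Algebra K R] [Algebra.FiniteType K R] (hp : p.Prime)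
    [ExpChar K p] [PerfectRing K p] {d : ℕ} (hd : ringKrullDim R ≤ d) :
    ∃ (e : ℕ) (f : (Fin (p ^ d) → R) →+ R),
      (∀ b z, f (b ^ p ^ e • z) = b ^ p ^ (e + 1) * f z) ∧
      ∃ c, (∀ P ∈ minimalPrimes R, c ∉ P) ∧ ∀ x, ∃ z, f z = c * x := by
  let N := nilradical R
  have := Algebra.FiniteType.isNoetherianRing K R
  have : IsReduced (R ⧸ N) :=
    (Ideal.isRadical_iff_quotient_reduced _).mp (Ideal.radical_isRadical ⊥)
  have : Nontrivial (R ⧸ N) := Ideal.Quotient.nontrivial_iff.mpr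
    (Ideal.radical_eq_top.not.mpr bot_ne_top)
  have := expChar_of_injective_algebraMap (algebraMap K R).injective p
  have := expChar_of_injective_algebraMap (algebraMap K (R ⧸ N)).injective p
  obtain ⟨e, he⟩ := exists_iterateFrobenius_eq_zero_of_mem_nilradical R hp
  let φ : R ⧸ N →+* R := Ideal.Quotient.lift N (iterateFrobenius R p e) he
  have hφ : φ.Finite := .of_comp_finite (f := Ideal.Quotient.mk N)
    (Ideal.Quotient.lift_comp_mk _ _ he ▸ finite_iterateFrobenius K e)
  algebraize [φ]
  have hdA : ringKrullDim (R ⧸ N) ≤ d := (ringKrullDim_quotient_le _).trans hd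
  obtain ⟨f, c, hc, hf⟩ := exists_semilinear_generically_surjective (M := R) fun P hP ↦
    exists_semilinear_at_minimalPrime (p := p) hP (exists_generators_at_minimalPrime K hdA hP)
  obtain ⟨c, rfl⟩ := Ideal.Quotient.mk_surjective c
  have hsmul (b x : R) : Ideal.Quotient.mk N b • x = b ^ p ^ e * x := rfl
  refine ⟨e, f.toAddMonoidHom, fun b z ↦ ?_, c ^ p ^ e, fun P hP hcP ↦ ?_, hf⟩
  · calc f (b ^ p ^ e • z) = f (Ideal.Quotient.mk N b • z) := rfl
      _ = b ^ p ^ (e + 1) * f z := by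
        rw [map_smulₛₗ, frobenius_def, ← map_pow, hsmul, ← pow_mul, pow_succ']
  · obtain ⟨Q, hQ, rfl⟩ := exists_comap_mk_nilradical_eq_of_mem_minimalPrimes hP
    have := hQ.1.1
    exact hc Q hQ (Ideal.mem_comap.mp (Ideal.IsPrime.mem_of_pow_mem inferInstance _ hcP))

end GenericFrobenius

section QuotDim

open Module

variable {k R : Type*} [Field k] [CommRing R] [Algebra k R]

/-- The dimension of the image of the subspace `V` in `R ⧸ I`. For `V` a graded piece it is a value
of the Hilbert function of `R ⧸ I`. -/
def quotDim (V : Submodule k R) (I : Ideal R) : ℕ :=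
  finrank k (V.map (I.mkQ.restrictScalars k))

variable {V : Submodule k R} {I J : Ideal R}

lemma map_mkQ_eq_top (hV : V ⊔ I.restrictScalars k = ⊤) :
    V.map (I.mkQ.restrictScalars k) = ⊤ := by
  refine top_le_iff.mp fun z _ ↦ ?_
  obtain ⟨a, rfl⟩ := I.mkQ_surjective z
  obtain ⟨b, hb, c, hc, rfl⟩ := Submodule.mem_sup.mp (hV ▸ Submodule.mem_top (x := a))
  refine ⟨b, hb, (Submodule.Quotient.eq I).mpr ?_⟩
  rw [sub_add_cancel_left]
  exact neg_mem hc

lemma quotDim_eq_finrank (hV : V ⊔ I.restrictScalars k = ⊤) :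
    quotDim V I = finrank k (R ⧸ I) := by
  rw [quotDim, map_mkQ_eq_top hV, finrank_top]

lemma quotDim_le_finrank [Module.Finite k (R ⧸ I)] : quotDim V I ≤ finrank k (R ⧸ I) :=
  Submodule.finrank_le _

lemma quotDim_anti [Module.Finite k (R ⧸ I)] (hIJ : I ≤ J) : quotDim V J ≤ quotDim V I := by
  have hmap : V.map (J.mkQ.restrictScalars k) = (V.map (I.mkQ.restrictScalars k)).map
      (Ideal.Quotient.factorₐ k hIJ).toLinearMap := by
    rw [← Submodule.map_comp]
    rfl
  rw [quotDim, hmap]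
  exact Submodule.finrank_map_le _ _

lemma quotDim_le_card_of_le_span_sup {ι : Type*} [Fintype ι] {b : ι → R}
    (h : V ≤ Submodule.span k (Set.range b) ⊔ I.restrictScalars k) :
    quotDim V I ≤ Fintype.card ι := by
  have hle : V.map (I.mkQ.restrictScalars k) ≤ Submodule.span k (Set.range (I.mkQ ∘ b)) := by
    rw [Submodule.map_le_iff_le_comap]
    refine h.trans (sup_le (Submodule.span_le.mpr ?_) fun x hx ↦ ?_)
    · rintro _ ⟨i, rfl⟩
      exact Submodule.subset_span ⟨i, rfl⟩
    · have hx0 : I.mkQ x = 0 := (Submodule.Quotient.mk_eq_zero I).mpr hx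
      exact Submodule.mem_comap.mpr (hx0 ▸ zero_mem _)
  have := FiniteDimensional.span_of_finite k (Set.finite_range (I.mkQ ∘ b))
  exact (Submodule.finrank_mono hle).trans (finrank_range_le_card _)

lemma exists_le_span_sup [Module.Finite k (R ⧸ I)] (V : Submodule k R) :
    ∃ b : Fin (quotDim V I) → R, V ≤ Submodule.span k (Set.range b) ⊔ I.restrictScalars k := by
  let v := finBasis k (V.map (I.mkQ.restrictScalars k))
  choose b hb using fun i ↦ I.mkQ_surjective (v i)
  refine ⟨b, fun x hx ↦ ?_⟩
  let y : V.map (I.mkQ.restrictScalars k) := ⟨I.mkQ x, Submodule.mem_map_of_mem hx⟩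
  have hy : I.mkQ (∑ i, v.repr y i • b i) = I.mkQ x := by
    have hsum := congr_arg Subtype.val (v.sum_repr y)
    rw [Submodule.coe_sum] at hsum
    refine (map_sum I.mkQ _ _).trans (Eq.trans ?_ hsum)
    refine Finset.sum_congr rfl fun i _ ↦ ?_
    rw [Submodule.coe_smul, ← hb]
    exact (I.mkQ.restrictScalars k).map_smul _ _
  rw [← add_sub_cancel (∑ i, v.repr y i • b i) x]
  exact Submodule.add_mem_sup ((Submodule.mem_span_range_iff_exists_fun k).mpr ⟨_, rfl⟩)
    ((Submodule.Quotient.eq I).mp hy.symm)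

lemma quotDim_mono [Module.Finite k (R ⧸ I)] {V W : Submodule k R} (h : V ≤ W) :
    quotDim V I ≤ quotDim W I :=
  Submodule.finrank_mono (Submodule.map_mono h)

lemma quotDim_le_quotDim_map_mulLeft_add [Module.Finite k (R ⧸ I)] (V : Submodule k R) (c : R) :
    quotDim V I ≤
      quotDim (V.map (LinearMap.mulLeft k c)) I + finrank k (R ⧸ Ideal.span {c} ⊔ I) := by
  let φ := LinearMap.mulLeft k (Ideal.Quotient.mk I c)
  let ψ := (Ideal.Quotient.factorₐ k (le_sup_right : I ≤ Ideal.span {c} ⊔ I)).toLinearMap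
  have hψ : Function.Surjective ψ := Ideal.Quotient.factor_surjective le_sup_right
  have hker : LinearMap.ker ψ ≤ LinearMap.range φ := by
    intro x hx
    obtain ⟨r, rfl⟩ := Ideal.Quotient.mk_surjective x
    obtain ⟨a, i, hi, hr⟩ := Ideal.mem_span_singleton_sup.mp (Ideal.Quotient.eq_zero_iff_mem.mp hx)
    refine ⟨Ideal.Quotient.mk I a, ?_⟩
    rw [LinearMap.mulLeft_apply, ← map_mul, Ideal.Quotient.eq, ← hr, mul_comm, ← sub_sub, sub_self,
      zero_sub]
    exact neg_mem hi
  have hkerφ : finrank k (LinearMap.ker φ) ≤ finrank k (R ⧸ Ideal.span {c} ⊔ I) := by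
    have h1 := φ.finrank_range_add_finrank_ker
    have h2 := ψ.finrank_range_add_finrank_ker
    have h3 := Submodule.finrank_mono hker
    rw [LinearMap.range_eq_top.mpr hψ, finrank_top] at h2
    lia
  let W := V.map (I.mkQ.restrictScalars k)
  have hW : (V.map (LinearMap.mulLeft k c)).map (I.mkQ.restrictScalars k) = W.map φ := by
    rw [← Submodule.map_comp, ← Submodule.map_comp]
    rfl
  have hWφ := (φ.domRestrict W).finrank_range_add_finrank_ker
  rw [LinearMap.range_domRestrict] at hWφ
  have hkerW : finrank k (LinearMap.ker (φ.domRestrict W)) ≤ finrank k (LinearMap.ker φ) := by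
    rw [LinearMap.ker_domRestrict, ← Submodule.finrank_map_subtype_eq, Submodule.map_comap_subtype]
    exact Submodule.finrank_mono inf_le_right
  rw [quotDim, quotDim, hW]
  change finrank k W ≤ _
  lia

end QuotDim

section Monomials

variable (k : Type*) {R σ : Type*} [Field k] [CommRing R] [Algebra k R] [Fintype σ]

/-- The span of the monomials `∏ i, x i ^ α i` of weight `∑ i, α i * w i` at most `t`. For
homogeneous generators `x i` of degree `w i` it is the part of degree at most `t`. Unlike a grading,
it behaves well under semilinear maps and commutes with base change. -/
def monomialSpan (x : σ → R) (w : σ → ℕ) (t : ℕ) : Submodule k R :=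
  Submodule.span k {r | ∃ α : σ → ℕ, ∑ i, α i * w i ≤ t ∧ ∏ i, x i ^ α i = r}

variable {k} {x : σ → R} {w : σ → ℕ}

lemma monomialSpan_mono {s t : ℕ} (h : s ≤ t) : monomialSpan k x w s ≤ monomialSpan k x w t :=
  Submodule.span_mono fun _ ⟨α, hα, hr⟩ ↦ ⟨α, hα.trans h, hr⟩

lemma prod_pow_mem_monomialSpan {α : σ → ℕ} {t : ℕ} (hα : ∑ i, α i * w i ≤ t) :
    ∏ i, x i ^ α i ∈ monomialSpan k x w t :=
  Submodule.subset_span ⟨α, hα, rfl⟩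

lemma mul_mem_monomialSpan {s t : ℕ} {a b : R} (ha : a ∈ monomialSpan k x w s)
    (hb : b ∈ monomialSpan k x w t) : a * b ∈ monomialSpan k x w (s + t) := by
  have hab := Submodule.mul_mem_mul ha hb
  rw [monomialSpan, monomialSpan, Submodule.span_mul_span] at hab
  refine Submodule.span_mono ?_ hab
  rintro _ ⟨_, ⟨α, hα, rfl⟩, _, ⟨β, hβ, rfl⟩, rfl⟩
  refine ⟨α + β, ?_, ?_⟩
  · simp only [Pi.add_apply, add_mul, Finset.sum_add_distrib]
    exact add_le_add hα hβ
  · simp only [Pi.add_apply, pow_add, Finset.prod_mul_distrib]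

lemma exists_mem_monomialSpan (hx : Algebra.adjoin k (Set.range x) = ⊤) (w : σ → ℕ) (r : R) :
    ∃ t, r ∈ monomialSpan k x w t := by
  have hr := hx ▸ Algebra.mem_top (x := r)
  rw [Algebra.adjoin_range_eq_range_aeval] at hr
  obtain ⟨f, rfl⟩ := hr
  refine ⟨f.support.sup fun α ↦ ∑ i, α i * w i, ?_⟩
  change MvPolynomial.aeval x f ∈ _
  rw [MvPolynomial.aeval_def, MvPolynomial.eval₂_eq']
  refine sum_mem fun α hα ↦ ?_
  rw [← Algebra.smul_def]
  exact Submodule.smul_mem _ _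
    (prod_pow_mem_monomialSpan (Finset.le_sup (f := fun α : σ →₀ ℕ ↦ ∑ i, α i * w i) hα))

end Monomials

section FrobeniusRecursion

variable {K R ι σ : Type*} [Field K] [CommRing R] [Algebra K R] [Fintype σ] {p e : ℕ}

instance ringHomSurjective_frobenius [ExpChar K p] [PerfectRing K p] :
    RingHomSurjective (frobenius K p) :=
  ⟨(bijective_frobenius K p).surjective⟩

variable [ExpChar K p] {g : (ι → R) →ₛₗ[frobenius K p] R}
  (hg : ∀ b z, g (b ^ p ^ e • z) = b ^ p ^ (e + 1) * g z)

include hg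

lemma map_single_mem_bracketPow_succ [DecidableEq ι] {I : Ideal R} {n : ℕ} (hn : e ≤ n) (i : ι)
    {a : R} (ha : a ∈ bracketPow I (p ^ n)) :
    g (Pi.single i a) ∈ bracketPow I (p ^ (n + 1)) := by
  suffices h : ∀ r, g (Pi.single i (r * a)) ∈ bracketPow I (p ^ (n + 1)) by simpa using h 1
  induction ha using Submodule.span_induction with
  | mem _ h =>
    obtain ⟨b, hb, rfl⟩ := h
    obtain ⟨m, rfl⟩ := Nat.exists_eq_add_of_le' hn
    intro r
    have hpow : r * b ^ p ^ (m + e) = (b ^ p ^ m) ^ p ^ e • r := by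
      rw [← pow_mul, ← pow_add, smul_eq_mul, mul_comm]
    rw [hpow, Pi.single_smul', hg, ← pow_mul, ← pow_add]
    exact Ideal.mul_mem_right _ _ (pow_mem_bracketPow _ hb)
  | zero => simp only [mul_zero, Pi.single_zero, map_zero, zero_mem, implies_true]
  | add a b _ _ iha ihb =>
    intro r
    rw [mul_add, Pi.single_add, map_add]
    exact add_mem (iha r) (ihb r)
  | smul s a _ ih =>
    intro r
    rw [smul_eq_mul, ← mul_assoc]
    exact ih (r * s)

variable [PerfectRing K p]

lemma map_pi_le_span_sup_bracketPow_succ [Finite ι] [DecidableEq ι] {κ : Type*} {b : κ → R}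
    {V : Submodule K R} {I : Ideal R} {n : ℕ} (hn : e ≤ n)
    (hV : V ≤ Submodule.span K (Set.range b) ⊔ (bracketPow I (p ^ n)).restrictScalars K) :
    (Submodule.pi Set.univ fun _ : ι ↦ V).map g ≤
      Submodule.span K (Set.range fun ij : ι × κ ↦ g (Pi.single ij.1 (b ij.2))) ⊔
        (bracketPow I (p ^ (n + 1))).restrictScalars K := by
  cases nonempty_fintype ι
  rintro _ ⟨z, hz, rfl⟩
  rw [← Finset.univ_sum_single z, map_sum]
  refine sum_mem fun i _ ↦ ?_
  let gi := g.comp (LinearMap.single K (fun _ : ι ↦ R) i)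
  refine (hV.trans (?_ : _ ≤ Submodule.comap gi (Submodule.span K _ ⊔ _))) (hz i trivial)
  refine sup_le (Submodule.span_le.mpr ?_) fun a ha ↦ ?_
  · rintro _ ⟨j, rfl⟩
    exact Submodule.mem_sup_left (Submodule.subset_span ⟨(i, j), rfl⟩)
  · exact Submodule.mem_sup_right (map_single_mem_bracketPow_succ hg hn i ha)

lemma exists_map_mulLeft_monomialSpan_le [Finite ι] {c : R} (hc : ∀ r, ∃ z, g z = c * r) {x : σ → R}
    (hx : Algebra.adjoin K (Set.range x) = ⊤) (w : σ → ℕ) :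
    ∃ C : ℕ, ∀ t, (monomialSpan K x w (p * t + (p - 1))).map (LinearMap.mulLeft K c) ≤
      (Submodule.pi Set.univ fun _ : ι ↦ monomialSpan K x w (t + C)).map g := by
  classical
  cases nonempty_fintype ι
  have hpe : 0 < p ^ (e + 1) := pow_pos (expChar_pos K p) _
  choose r hr using fun u : σ → Fin (p ^ (e + 1)) ↦ hc (∏ i, x i ^ (u i : ℕ))
  choose C hC using fun (ui : (σ → Fin (p ^ (e + 1))) × ι) ↦
    exists_mem_monomialSpan hx w (r ui.1 ui.2)
  refine ⟨Finset.univ.sup C, fun t ↦ ?_⟩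
  rw [monomialSpan.eq_1 K x w (p * t + (p - 1)), Submodule.map_span, Submodule.span_le]
  rintro _ ⟨_, ⟨α, hα, rfl⟩, rfl⟩
  have hα' : ∑ i, α i * w i < p * (t + 1) := by
    have := expChar_pos K p
    rw [Nat.mul_succ]
    lia
  let u (i : σ) : Fin (p ^ (e + 1)) := ⟨α i % p ^ (e + 1), Nat.mod_lt _ hpe⟩
  let b := ∏ i, x i ^ (α i / p ^ (e + 1))
  refine ⟨b ^ p ^ e • r u, fun i _ ↦ ?_, ?_⟩
  · refine mul_mem_monomialSpan ?_
      (monomialSpan_mono (Finset.le_sup (f := C) (Finset.mem_univ (u, i))) (hC (u, i)))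
    simp only [b, ← Finset.prod_pow, ← pow_mul]
    refine prod_pow_mem_monomialSpan
      (Nat.lt_succ_iff.mp (Nat.lt_of_mul_lt_mul_left (a := p) (lt_of_le_of_lt ?_ hα')))
    rw [Finset.mul_sum]
    refine Finset.sum_le_sum fun i _ ↦ ?_
    calc p * (α i / p ^ (e + 1) * p ^ e * w i) = α i / p ^ (e + 1) * p ^ (e + 1) * w i := by ring
      _ ≤ α i * w i := Nat.mul_le_mul_right _ (Nat.div_mul_le_self _ _)
  · rw [hg, hr, mul_left_comm, LinearMap.mulLeft_apply]
    simp only [b, u, ← Finset.prod_pow, ← Finset.prod_mul_distrib, ← pow_mul, ← pow_add,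
      mul_comm _ (p ^ (e + 1)), Nat.div_add_mod]

lemma exists_quotDim_monomialSpan_succ_le [Fintype ι] {c : R} (hc : ∀ r, ∃ z, g z = c * r)
    {x : σ → R} (hx : Algebra.adjoin K (Set.range x) = ⊤) (w : σ → ℕ) {I : Ideal R}
    (hI : ∀ q, Module.Finite K (R ⧸ bracketPow I q)) :
    ∃ C : ℕ, ∀ n ≥ e, ∀ t,
      quotDim (monomialSpan K x w (p * t + (p - 1))) (bracketPow I (p ^ (n + 1))) ≤
        Fintype.card ι * quotDim (monomialSpan K x w (t + C)) (bracketPow I (p ^ n)) +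
          Module.finrank K (R ⧸ Ideal.span {c} ⊔ bracketPow I (p ^ (n + 1))) := by
  classical
  obtain ⟨C, hC⟩ := exists_map_mulLeft_monomialSpan_le hg hc hx w
  refine ⟨C, fun n hn t ↦ (quotDim_le_quotDim_map_mulLeft_add _ c).trans
    (Nat.add_le_add_right ?_ _)⟩
  obtain ⟨b, hb⟩ := exists_le_span_sup (I := bracketPow I (p ^ n)) (monomialSpan K x w (t + C))
  refine (quotDim_le_card_of_le_span_sup
    ((hC t).trans (map_pi_le_span_sup_bracketPow_succ hg hn hb))).trans_eq ?_
  rw [Fintype.card_prod, Fintype.card_fin]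

end FrobeniusRecursion

section BaseChange

open Module TensorProduct Algebra.TensorProduct

variable {k R σ : Type*} (K : Type*) [Field k] [Field K] [CommRing R] [Algebra k K] [Algebra k R]

lemma isIntegral_aeval_tmul {g : MvPolynomial σ k →ₐ[k] R}
    (hg : g.toRingHom.IsIntegral) :
    (MvPolynomial.aeval (R := K) fun i ↦ (1 : K) ⊗ₜ[k] g (.X i)).toRingHom.IsIntegral := by
  set h := MvPolynomial.aeval (R := K) fun i ↦ (1 : K) ⊗ₜ[k] g (.X i)
  have hcomp : h.toRingHom.comp (MvPolynomial.map (algebraMap k K)) =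
      (includeRight : R →ₐ[k] K ⊗[k] R).toRingHom.comp g.toRingHom := by
    ext
    · simp [h]
    · simp [h]
  intro z
  induction z using TensorProduct.induction_on with
  | zero => exact RingHom.isIntegralElem_zero _
  | add x y hx hy => exact hx.add _ hy
  | tmul a r =>
    have ha : h.toRingHom.IsIntegralElem (a ⊗ₜ 1) := by
      have := h.toRingHom.isIntegralElem_map (x := MvPolynomial.C a)
      simpa [h] using this
    obtain ⟨f, hf, hfr⟩ := hg r
    have hr : h.toRingHom.IsIntegralElem ((1 : K) ⊗ₜ r) := by
      refine ⟨f.map (MvPolynomial.map (algebraMap k K)), hf.map _, ?_⟩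
      rw [Polynomial.eval₂_map, hcomp]
      exact (Polynomial.hom_eval₂ _ _ _ _).symm.trans (by rw [hfr, map_zero])
    simpa using ha.mul _ hr

lemma ringKrullDim_tensorProduct_le [Algebra.FiniteType k R] {d : ℕ} (hd : ringKrullDim R ≤ d) :
    ringKrullDim (K ⊗[k] R) ≤ d := by
  obtain ⟨g, hg⟩ := exists_finite_algHom_mvPolynomial (k := k) hd
  have h := isIntegral_aeval_tmul K hg.to_isIntegral
  algebraize [(MvPolynomial.aeval (R := K) fun i ↦ (1 : K) ⊗ₜ[k] g (.X i)).toRingHom]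
  rw [← ringKrullDim_mvPolynomial_fin K d]
  exact ringKrullDim_le_of_isIntegral

lemma adjoin_range_tmul_eq_top {x : σ → R} (hx : Algebra.adjoin k (Set.range x) = ⊤) :
    Algebra.adjoin K (Set.range fun i ↦ (1 : K) ⊗ₜ[k] x i) = ⊤ := by
  set S := Algebra.adjoin K (Set.range fun i ↦ (1 : K) ⊗ₜ[k] x i)
  have hS : Algebra.adjoin k (Set.range x) ≤ (S.restrictScalars k).comap includeRight := by
    rw [Algebra.adjoin_le_iff]
    rintro _ ⟨i, rfl⟩
    exact Algebra.subset_adjoin ⟨i, rfl⟩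
  refine eq_top_iff.mpr fun z _ ↦ ?_
  induction z using TensorProduct.induction_on with
  | zero => exact zero_mem _
  | add x y hx hy => exact add_mem (hx trivial) (hy trivial)
  | tmul a r =>
    rw [← mul_one a, ← smul_eq_mul, ← TensorProduct.smul_tmul']
    exact S.smul_mem (hS (hx ▸ Algebra.mem_top)) a

lemma monomialSpan_tmul [Fintype σ] (x : σ → R) (w : σ → ℕ) (t : ℕ) :
    monomialSpan K (fun i ↦ (1 : K) ⊗ₜ[k] x i) w t = (monomialSpan k x w t).baseChange K := by
  rw [monomialSpan, monomialSpan, Submodule.baseChange_span]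
  congr 1
  ext z
  constructor
  · rintro ⟨α, hα, rfl⟩
    refine ⟨_, ⟨α, hα, rfl⟩, ?_⟩
    exact (map_prod includeRight _ _).trans (by simp)
  · rintro ⟨_, ⟨α, hα, rfl⟩, rfl⟩
    exact ⟨α, hα, ((map_prod includeRight _ _).trans (by simp)).symm⟩

lemma quotDim_baseChange (V : Submodule k R) (I : Ideal R) :
    quotDim (V.baseChange K) (I.map (includeRight : R →ₐ[k] K ⊗[k] R)) = quotDim V I := by
  let E := (tensorQuotientEquiv (R := k) K R K I).toLinearEquiv
  have hmap : (V.baseChange K).map ((I.map includeRight).mkQ.restrictScalars K) =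
      ((V.map (I.mkQ.restrictScalars k)).baseChange K).map (E : _ →ₗ[K] _) := by
    rw [Submodule.baseChange_eq_span, Submodule.map_span, Submodule.baseChange_eq_span,
      Submodule.map_span]
    congr 1
    ext z
    simp [E]
  rw [quotDim, hmap, LinearEquiv.finrank_map_eq,
    ← (Submodule.toBaseChange.toLinearEquiv K _).finrank_eq, finrank_baseChange, quotDim]

instance finite_quotient_map_includeRight (I : Ideal R) [Module.Finite k (R ⧸ I)] :
    Module.Finite K ((K ⊗[k] R) ⧸ I.map (includeRight : R →ₐ[k] K ⊗[k] R)) :=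
  .equiv (tensorQuotientEquiv (R := k) K R K I).toLinearEquiv

end BaseChange

section Recursion

open Module

variable {k R σ : Type*} [Field k] [CommRing R] [Algebra k R] [Algebra.FiniteType k R] [Fintype σ]
  {p d : ℕ}

lemma exists_pow_mul_quotDim_succ_le_of_perfectRing (hp : p.Prime) [ExpChar k p] [PerfectRing k p]
    (hd : ringKrullDim R ≤ d) {x : σ → R} (hx : Algebra.adjoin k (Set.range x) = ⊤) (w : σ → ℕ)
    (I : Ideal R) [Module.Finite k (R ⧸ I)] [Nontrivial R] :
    ∃ C e : ℕ, ∀ n ≥ e, ∀ t,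
      p ^ (n + 1) * quotDim (monomialSpan k x w (p * t + (p - 1))) (bracketPow I (p ^ (n + 1))) ≤
        p ^ (n + 1) * (p ^ d * quotDim (monomialSpan k x w (t + C)) (bracketPow I (p ^ n))) +
          C * (p ^ (n + 1)) ^ d := by
  obtain ⟨e, f, hf, c, hc, hfc⟩ := exists_frobenius_semilinear_generically_surjective k hp hd
  let g : (Fin (p ^ d) → R) →ₛₗ[frobenius k p] R :=
    { f with
      map_smul' := fun a z ↦ by
        obtain ⟨b, rfl⟩ := (bijective_iterateFrobenius k p e).surjective a
        have hz : iterateFrobenius k p e b • z = algebraMap k R b ^ p ^ e • z := by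
          rw [iterateFrobenius_def, ← map_pow, algebraMap_smul]
        have hb : frobenius k p (iterateFrobenius k p e b) = b ^ p ^ (e + 1) := by
          rw [iterateFrobenius_def, frobenius_def, ← pow_mul, ← pow_succ]
        change f _ = _ • f z
        rw [hz, hf, hb, Algebra.smul_def, map_pow] }
  obtain ⟨B, hB⟩ := exists_finrank_quotient_bracketPow_le (k := k) I hd
  obtain ⟨C₁, hC₁⟩ := exists_quotDim_monomialSpan_succ_le (g := g) hf hfc hx w fun q ↦ (hB q).1
  obtain ⟨C₂, hC₂⟩ := exists_mul_finrank_quotient_sup_bracketPow_le (k := k) I hd hc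
  refine ⟨max C₁ C₂, e, fun n hn t ↦ ?_⟩
  have := (hB (p ^ n)).1
  have hmono := quotDim_mono (I := bracketPow I (p ^ n))
    (monomialSpan_mono (k := k) (x := x) (w := w) (Nat.add_le_add_left (le_max_left C₁ C₂) t))
  calc _ ≤ p ^ (n + 1) * (Fintype.card (Fin (p ^ d)) *
          quotDim (monomialSpan k x w (t + C₁)) (bracketPow I (p ^ n)) +
            finrank k (R ⧸ Ideal.span {c} ⊔ bracketPow I (p ^ (n + 1)))) :=
        Nat.mul_le_mul_left _ (hC₁ n hn t)
    _ ≤ _ := by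
        rw [mul_add, Fintype.card_fin]
        refine add_le_add (Nat.mul_le_mul_left _ (Nat.mul_le_mul_left _ hmono)) ?_
        exact (hC₂ _).trans (Nat.mul_le_mul_right _ (le_max_right _ _))

theorem exists_pow_mul_quotDim_succ_le (hp : p.Prime) [ExpChar k p]
    (hd : ringKrullDim R ≤ d) {x : σ → R} (hx : Algebra.adjoin k (Set.range x) = ⊤) (w : σ → ℕ)
    (I : Ideal R) [Module.Finite k (R ⧸ I)] :
    ∃ C e : ℕ, ∀ n ≥ e, ∀ t,
      p ^ (n + 1) * quotDim (monomialSpan k x w (p * t + (p - 1))) (bracketPow I (p ^ (n + 1))) ≤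
        p ^ (n + 1) * (p ^ d * quotDim (monomialSpan k x w (t + C)) (bracketPow I (p ^ n))) +
          C * (p ^ (n + 1)) ^ d := by
  rcases subsingleton_or_nontrivial R with _ | _
  · refine ⟨0, 0, fun n _ t ↦ ?_⟩
    rw [quotDim, finrank_zero_of_subsingleton, mul_zero]
    exact Nat.zero_le _
  -- Extending scalars to the algebraic closure makes the ground field perfect and changes none of
  -- the dimensions.
  let K := AlgebraicClosure k
  let ι : R →ₐ[k] TensorProduct k K R := Algebra.TensorProduct.includeRight
  have hι : Function.Injective ι :=
    Algebra.TensorProduct.includeRight_injective (algebraMap k K).injective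
  have := hι.nontrivial
  have := expChar_of_injective_algebraMap (algebraMap k K).injective p
  have := expChar_of_injective_algebraMap (algebraMap k R).injective p
  have := expChar_of_injective_algebraMap (algebraMap k (TensorProduct k K R)).injective p
  obtain ⟨C, e, h⟩ := exists_pow_mul_quotDim_succ_le_of_perfectRing hp
    (ringKrullDim_tensorProduct_le K hd) (adjoin_range_tmul_eq_top K hx) w (I.map ι)
  refine ⟨C, e, fun n hn t ↦ ?_⟩
  have hquot (n t : ℕ) : quotDim (monomialSpan K (fun i ↦ ι (x i)) w t)
      (bracketPow (I.map ι) (p ^ n)) = quotDim (monomialSpan k x w t) (bracketPow I (p ^ n)) := by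
    have hmap : (bracketPow I (p ^ n)).map ι = bracketPow (I.map ι) (p ^ n) :=
      map_bracketPow ι.toRingHom I n
    rw [← hmap]
    exact (congr_arg₂ quotDim (monomialSpan_tmul K x w t) rfl).trans (quotDim_baseChange K _ _)
  rw [← hquot, ← hquot]
  exact h n hn t

end Recursion

section Convergence

open Finset MeasureTheory Topology

lemma exists_ae_tendsto_of_antitone_shift {G : ℕ → ℝ → ℝ} (hmono : ∀ n, Monotone (G n))
    (hpos : ∀ n s, 0 ≤ G n s) {ε : ℕ → ℝ} (hε0 : ∀ n, 0 ≤ ε n) (hε : Tendsto ε atTop (𝓝 0))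
    (hanti : ∀ s ≥ 0, Antitone fun n ↦ G n (s + ε n) + ε n) :
    ∃ L : ℝ → ℝ, ∀ᵐ s, 0 < s → Tendsto (G · s) atTop (𝓝 (L s)) := by
  have hlim (s : ℝ) : ∃ l, Tendsto (fun n ↦ G n (max s 0 + ε n)) atTop (𝓝 l) := by
    have hbdd : BddBelow (Set.range fun n ↦ G n (max s 0 + ε n) + ε n) :=
      ⟨0, Set.forall_mem_range.mpr fun n ↦ add_nonneg (hpos _ _) (hε0 n)⟩
    have h := (tendsto_atTop_ciInf (hanti _ (le_max_right s 0)) hbdd).sub hε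
    simp only [add_sub_cancel_right] at h
    exact ⟨_, h⟩
  choose L hL using hlim
  have hLmono : Monotone L := fun s t hst ↦ le_of_tendsto_of_tendsto' (hL s) (hL t) fun n ↦
    hmono n (by gcongr)
  refine ⟨L, ?_⟩
  filter_upwards [hLmono.countable_not_continuousAt.ae_notMem volume] with s hs hs0
  replace hs : ContinuousAt L s := not_not.mp hs
  refine tendsto_order.mpr ⟨fun a ha ↦ ?_, fun b hb ↦ ?_⟩
  · have hnear : ∀ᶠ t in 𝓝[<] s, a < L t ∧ 0 < t :=
      nhdsWithin_le_nhds ((hs.eventually_const_lt ha).and (eventually_gt_nhds hs0))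
    obtain ⟨t, ⟨htL, ht0⟩, hts⟩ := (hnear.and self_mem_nhdsWithin).exists
    filter_upwards [(hL t).eventually_const_lt htL, hε.eventually_lt_const (sub_pos.mpr hts)]
      with n hn hεn
    rw [max_eq_left ht0.le] at hn
    exact hn.trans_le (hmono n (by linarith))
  · filter_upwards [(hL s).eventually_lt_const hb] with n hn
    refine (hmono n ?_).trans_lt hn
    rw [max_eq_left hs0.le]
    exact le_add_of_nonneg_right (hε0 n)

/-- The normalized distribution function `s ↦ q⁻ᵈ ∑_{j ≤ qs} a j` of the weights `a j` placed at
the points `j / q`. For `a` the Hilbert function of `R ⧸ I^{[q]}` these functions converge almost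
everywhere as `q → ∞`. -/
def rescaledSum (a : ℕ → ℕ) (q d : ℕ) (s : ℝ) : ℝ :=
  ((∑ j ∈ Icc 0 ⌊q * s⌋₊, a j : ℕ) : ℝ) / (q : ℝ) ^ d

variable {a : ℕ → ℕ} {q d : ℕ}

lemma rescaledSum_nonneg (s : ℝ) : 0 ≤ rescaledSum a q d s := by
  rw [rescaledSum]
  positivity

lemma monotone_rescaledSum : Monotone (rescaledSum a q d) := fun s t hst ↦ by
  rw [rescaledSum, rescaledSum]
  gcongr

lemma rescaledSum_le {D : ℕ} (hD : ∀ t, ∑ j ∈ Icc 0 t, a j ≤ D * q ^ d) (s : ℝ) :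
    rescaledSum a q d s ≤ D :=
  div_le_of_le_mul₀ (by positivity) (by positivity) (mod_cast hD _)

lemma rescaledSum_le_rescaledSum_add {b : ℕ → ℕ} {p C : ℕ} (hp : 0 < p) (hq : 0 < q)
    (h : ∀ t, p * q * ∑ j ∈ Icc 0 (p * t + (p - 1)), b j ≤
      p * q * (p ^ d * ∑ j ∈ Icc 0 (t + C), a j) + C * (p * q) ^ d) {s : ℝ} (hs : 0 ≤ s) :
    rescaledSum b (p * q) d s ≤ rescaledSum a q d (s + C / q) + C / q := by
  have hpR : (1 : ℝ) ≤ p := mod_cast hp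
  have hqR : (0 : ℝ) < q := mod_cast hq
  set t := ⌊q * s⌋₊
  have hfloor : ⌊((p * q : ℕ) : ℝ) * s⌋₊ ≤ p * t + (p - 1) := by
    have hlt : (q : ℝ) * s < t + 1 := Nat.lt_floor_add_one _
    have : ⌊((p * q : ℕ) : ℝ) * s⌋₊ < p * (t + 1) := by
      rw [Nat.floor_lt (by positivity)]
      push_cast
      rw [mul_assoc]
      gcongr
    rw [Nat.mul_succ] at this
    lia
  have hshift : ⌊q * (s + C / q)⌋₊ = t + C := by
    rw [mul_add, mul_div_cancel₀ _ hqR.ne', Nat.floor_add_natCast (by positivity)]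
  have hsum : ∑ j ∈ Icc 0 ⌊((p * q : ℕ) : ℝ) * s⌋₊, b j ≤ ∑ j ∈ Icc 0 (p * t + (p - 1)), b j := by
    gcongr
  have hrec : (p * q : ℝ) * (∑ j ∈ Icc 0 ⌊((p * q : ℕ) : ℝ) * s⌋₊, b j : ℕ) ≤
      p * q * (p ^ d * (∑ j ∈ Icc 0 (t + C), a j : ℕ)) + C * (p * q) ^ d :=
    mod_cast (Nat.mul_le_mul_left _ hsum).trans (h t)
  have hdiv : (C : ℝ) / (p * q) ≤ C / q := by
    gcongr
    exact le_mul_of_one_le_left hqR.le hpR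
  rw [rescaledSum, rescaledSum, hshift]
  refine le_trans ?_ (add_le_add_right hdiv _)
  rw [Nat.cast_mul, div_le_iff₀ (by positivity), mul_pow]
  rw [Nat.cast_mul, mul_pow] at hrec
  field_simp
  linarith

lemma sum_mul_div_eq_sub_integral_rescaledSum {φ : ℝ → ℂ} (hφ : ContDiff ℝ 1 φ) (hq : 0 < q)
    {B : ℝ} (hB : 0 ≤ B) :
    (1 / (q : ℂ)) ^ d * ∑ j ∈ Icc 0 ⌊q * B⌋₊, (a j : ℂ) * φ (j / q) =
      φ B * rescaledSum a q d B - ∫ s in 0..B, deriv φ s * rescaledSum a q d s := by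
  have hqR : (0 : ℝ) < q := mod_cast hq
  let f (t : ℝ) : ℂ := φ (t / q)
  have hf : ContDiff ℝ 1 f := hφ.comp (contDiff_id.div_const _)
  have habel := sum_mul_eq_sub_integral_mul (fun j ↦ (a j : ℂ)) (f := f) (b := q * B)
    (by positivity) (fun t _ ↦ (hf.differentiable one_ne_zero).differentiableAt)
    ((hf.continuous_deriv le_rfl).integrableOn_Icc)
  have hderiv (s : ℝ) : q * deriv f (q * s) = deriv φ s := by
    have hφf : φ = fun s : ℝ ↦ f (q * s) := by
      ext s
      simp only [f, mul_div_cancel_left₀ s hqR.ne']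
    conv_rhs => rw [hφf, deriv_comp_mul_left, real_smul, ofReal_natCast]
  have hint : ∫ t in Set.Ioc 0 (q * B), deriv f t * ∑ j ∈ Icc 0 ⌊t⌋₊, (a j : ℂ) =
      ∫ s in 0..B, deriv φ s * ∑ j ∈ Icc 0 ⌊q * s⌋₊, (a j : ℂ) := by
    rw [← intervalIntegral.integral_of_le (by positivity)]
    nth_rewrite 1 [← mul_zero (q : ℝ)]
    rw [← intervalIntegral.smul_integral_comp_mul_left, real_smul,
      ← intervalIntegral.integral_const_mul]
    simp only [← hderiv, ofReal_natCast, mul_assoc]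
  have hfB : f (q * B) = φ B := by
    simp only [f, mul_div_cancel_left₀ B hqR.ne']
  rw [hint, hfB] at habel
  have hcast (s : ℝ) : (rescaledSum a q d s : ℂ) =
      (1 / (q : ℂ)) ^ d * ∑ j ∈ Icc 0 ⌊q * s⌋₊, (a j : ℂ) := by
    rw [rescaledSum]
    push_cast
    ring
  simp only [hcast, mul_left_comm _ ((1 / (q : ℂ)) ^ d), intervalIntegral.integral_const_mul,
    ← mul_sub]
  rw [← habel]
  exact congr_arg _ (sum_congr rfl fun j _ ↦ mul_comm _ _)

lemma exists_ae_tendsto_rescaledSum {p d C e : ℕ} (hp : 2 ≤ p) {a : ℕ → ℕ → ℕ}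
    (hrec : ∀ n ≥ e, ∀ t, p ^ (n + 1) * ∑ j ∈ Icc 0 (p * t + (p - 1)), a (n + 1) j ≤
      p ^ (n + 1) * (p ^ d * ∑ j ∈ Icc 0 (t + C), a n j) + C * (p ^ (n + 1)) ^ d) :
    ∃ L : ℝ → ℝ, ∀ᵐ s, 0 < s →
      Tendsto (fun n ↦ rescaledSum (a n) (p ^ n) d s) atTop (𝓝 (L s)) := by
  let q (n : ℕ) : ℕ := p ^ (n + e)
  let G (n : ℕ) : ℝ → ℝ := rescaledSum (a (n + e)) (q n) d
  let ε (n : ℕ) : ℝ := 2 * C / q n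
  have hq (n : ℕ) : 0 < q n := by positivity
  have hqs (n : ℕ) : q (n + 1) = p * q n := by
    simp only [q, add_right_comm n 1 e, pow_succ']
  have hε : Tendsto ε atTop (𝓝 0) := by
    refine tendsto_const_nhds.div_atTop (tendsto_natCast_atTop_atTop.comp ?_)
    exact (tendsto_pow_atTop_atTop_of_one_lt hp).comp (tendsto_add_atTop_nat e)
  have hstep (n : ℕ) (s : ℝ) (hs : 0 ≤ s) : G (n + 1) s ≤ G n (s + C / q n) + C / q n := by
    simp only [G, hqs, add_right_comm n 1 e]
    refine rescaledSum_le_rescaledSum_add (by lia) (hq n) (fun t ↦ ?_) hs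
    rw [← pow_succ']
    exact hrec (n + e) (Nat.le_add_left e n) t
  have hεn (n : ℕ) : ε (n + 1) + C / q n ≤ ε n := by
    have hqR : (0 : ℝ) < q n := mod_cast hq n
    have hpR : (2 : ℝ) ≤ p := mod_cast hp
    simp only [ε, hqs, Nat.cast_mul]
    rw [div_add_div _ _ (by positivity) hqR.ne', div_le_div_iff₀ (by positivity) hqR]
    have : 0 ≤ (p - 2) * (C * (q n : ℝ) ^ 2) := mul_nonneg (by linarith) (by positivity)
    linarith
  have hanti (s : ℝ) (hs : s ≥ 0) : Antitone fun n ↦ G n (s + ε n) + ε n := by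
    refine antitone_nat_of_succ_le fun n ↦ ?_
    calc G (n + 1) (s + ε (n + 1)) + ε (n + 1)
        ≤ G n (s + ε (n + 1) + C / q n) + C / q n + ε (n + 1) := by
          gcongr
          exact hstep n _ (by positivity)
      _ ≤ G n (s + ε n) + ε n := by
          rw [add_assoc, add_assoc, add_comm _ (ε (n + 1))]
          exact add_le_add (monotone_rescaledSum (by linarith [hεn n])) (hεn n)
  obtain ⟨L, hL⟩ := exists_ae_tendsto_of_antitone_shift (fun n ↦ monotone_rescaledSum)
    (fun n ↦ rescaledSum_nonneg) (fun n ↦ by positivity) hε hanti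
  refine ⟨L, hL.mono fun s hs h0 ↦ ?_⟩
  exact (tendsto_add_atTop_iff_nat (f := fun n ↦ rescaledSum (a n) (p ^ n) d s) e).mp (hs h0)

lemma tendsto_integral_mul_rescaledSum {a : ℕ → ℕ → ℕ} {q : ℕ → ℕ} {d D : ℕ}
    (hD : ∀ n t, ∑ j ∈ Icc 0 t, a n j ≤ D * q n ^ d) {L : ℝ → ℝ}
    (hL : ∀ᵐ s, 0 < s → Tendsto (fun n ↦ rescaledSum (a n) (q n) d s) atTop (𝓝 (L s)))
    {ψ : ℝ → ℂ} (hψ : Continuous ψ) {B : ℝ} (hB : 0 ≤ B) :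
    Tendsto (fun n ↦ ∫ s in 0..B, ψ s * rescaledSum (a n) (q n) d s) atTop
      (𝓝 (∫ s in 0..B, ψ s * L s)) := by
  refine intervalIntegral.tendsto_integral_filter_of_dominated_convergence (fun s ↦ ‖ψ s‖ * D)
    (.of_forall fun n ↦ ?_) (.of_forall fun n ↦ .of_forall fun s _ ↦ ?_)
    ((hψ.norm.mul continuous_const).intervalIntegrable 0 B) ?_
  · have hmeas : Measurable (rescaledSum (a n) (q n) d) := monotone_rescaledSum.measurable
    exact (hψ.measurable.mul (measurable_ofReal.comp hmeas)).aestronglyMeasurable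
  · rw [norm_mul, norm_real, Real.norm_of_nonneg (rescaledSum_nonneg s)]
    gcongr
    exact rescaledSum_le (hD n) s
  · filter_upwards [hL] with s hs hsB
    rw [Set.uIoc_of_le hB] at hsB
    exact ((continuous_ofReal.tendsto _).comp (hs hsB.1)).const_mul _

lemma exists_tendsto_sum_of_recursion {p d A C D e : ℕ} (hp : 2 ≤ p) {a : ℕ → ℕ → ℕ}
    (hA : ∀ n, ∀ j > A * p ^ n, a n j = 0) (hD : ∀ n t, ∑ j ∈ Icc 0 t, a n j ≤ D * (p ^ n) ^ d)
    (hrec : ∀ n ≥ e, ∀ t, p ^ (n + 1) * ∑ j ∈ Icc 0 (p * t + (p - 1)), a (n + 1) j ≤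
      p ^ (n + 1) * (p ^ d * ∑ j ∈ Icc 0 (t + C), a n j) + C * (p ^ (n + 1)) ^ d)
    {φ : ℝ → ℂ} (hφ : ContDiff ℝ 1 φ) :
    ∃ L, Tendsto (fun n ↦ (1 / (p : ℂ) ^ n) ^ d *
      ∑ j ∈ Icc 0 (A * p ^ n), (a n j : ℂ) * φ (j / p ^ n)) atTop (𝓝 L) := by
  obtain ⟨L, hL⟩ := exists_ae_tendsto_rescaledSum hp hrec
  have hvol : volume (Set.Ioi (A : ℝ)) ≠ 0 := Real.volume_Ioi ▸ ENNReal.top_ne_zero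
  obtain ⟨B, hBL, hAB⟩ := (hL.and_frequently (frequently_ae_mem_iff.mpr hvol)).exists
  have hB : 0 < B := A.cast_nonneg.trans_lt hAB
  refine ⟨φ B * L B - ∫ s in 0..B, deriv φ s * L s, ?_⟩
  have hsum (n : ℕ) :
      (1 / (p : ℂ) ^ n) ^ d * ∑ j ∈ Icc 0 (A * p ^ n), (a n j : ℂ) * φ (j / p ^ n) =
        φ B * rescaledSum (a n) (p ^ n) d B -
          ∫ s in 0..B, deriv φ s * rescaledSum (a n) (p ^ n) d s := by
    rw [← sum_mul_div_eq_sub_integral_rescaledSum hφ (by positivity) hB.le]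
    push_cast
    congr 1
    refine sum_subset (Icc_subset_Icc_right (Nat.le_floor ?_)) fun j _ hj ↦ ?_
    · push_cast
      rw [mul_comm]
      gcongr
      exact hAB.le
    · rw [hA n j (by simpa using hj), Nat.cast_zero, zero_mul]
  simp only [hsum]
  exact (((continuous_ofReal.tendsto _).comp (hBL hB)).const_mul _).sub
    (tendsto_integral_mul_rescaledSum hD hL (hφ.continuous_deriv le_rfl) hB.le)

end Convergence

section Comparison

open Finset Topology

lemma norm_sum_sub_sum_le {ι : Type*} {s : Finset ι} {a b : ι → ℕ} (hba : ∀ j, b j ≤ a j)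
    {f : ι → ℂ} {M : ℝ} (hf : ∀ j ∈ s, ‖f j‖ ≤ M) :
    ‖∑ j ∈ s, (a j : ℂ) * f j - ∑ j ∈ s, (b j : ℂ) * f j‖ ≤
      (∑ j ∈ s, (a j : ℝ) - ∑ j ∈ s, (b j : ℝ)) * M := by
  simp only [← sum_sub_distrib, ← sub_mul, sum_mul]
  refine norm_sum_le_of_le _ fun j hj ↦ ?_
  have h0 : (0 : ℝ) ≤ a j - b j := sub_nonneg.mpr (mod_cast hba j)
  rw [norm_mul, ← ofReal_natCast, ← ofReal_natCast, ← ofReal_sub, norm_real, Real.norm_of_nonneg h0]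
  exact mul_le_mul_of_nonneg_left (hf j hj) h0

lemma tendsto_sum_sub_sum_zero {p d A C N : ℕ} (hp : 2 ≤ p) {a b : ℕ → ℕ → ℕ}
    (hba : ∀ n j, b n j ≤ a n j)
    (hab : ∀ n ≥ N, p ^ n * ∑ j ∈ Icc 0 (A * p ^ n), a n j ≤
      p ^ n * ∑ j ∈ Icc 0 (A * p ^ n), b n j + C * (p ^ n) ^ d)
    {φ : ℝ → ℂ} (hφ : Continuous φ) :
    Tendsto (fun n ↦ (1 / (p : ℂ) ^ n) ^ d * ∑ j ∈ Icc 0 (A * p ^ n), (a n j : ℂ) * φ (j / p ^ n) -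
      (1 / (p : ℂ) ^ n) ^ d * ∑ j ∈ Icc 0 (A * p ^ n), (b n j : ℂ) * φ (j / p ^ n))
      atTop (𝓝 0) := by
  obtain ⟨M, hM⟩ := (isCompact_Icc (a := (0 : ℝ)) (b := A)).exists_bound_of_continuousOn
    hφ.continuousOn
  have hM0 : 0 ≤ M := (norm_nonneg _).trans (hM 0 ⟨le_rfl, A.cast_nonneg⟩)
  have hlim : Tendsto (fun n ↦ M * C / (p ^ n : ℕ)) atTop (𝓝 0) := tendsto_const_nhds.div_atTop
    (tendsto_natCast_atTop_atTop.comp (tendsto_pow_atTop_atTop_of_one_lt hp))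
  refine squeeze_zero_norm' ?_ hlim
  filter_upwards [eventually_ge_atTop N] with n hn
  have hq : (0 : ℝ) < p ^ n := by positivity
  have hφM : ∀ j ∈ Icc 0 (A * p ^ n), ‖φ (j / p ^ n)‖ ≤ M := fun j hj ↦ by
    refine hM _ ⟨by positivity, ?_⟩
    rw [div_le_iff₀ hq]
    exact mod_cast (mem_Icc.mp hj).2
  have hsum : ∑ j ∈ Icc 0 (A * p ^ n), (a n j : ℝ) - ∑ j ∈ Icc 0 (A * p ^ n), (b n j : ℝ) ≤
      C * (p ^ n) ^ d / p ^ n := by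
    have h : (p ^ n : ℝ) * ∑ j ∈ Icc 0 (A * p ^ n), (a n j : ℝ) ≤
      p ^ n * ∑ j ∈ Icc 0 (A * p ^ n), (b n j : ℝ) + C * (p ^ n) ^ d := mod_cast hab n hn
    rw [le_div_iff₀ hq]
    linarith
  rw [← mul_sub, norm_mul, norm_pow, norm_div, norm_one, norm_pow, norm_natCast]
  calc _ ≤ (1 / (p : ℝ) ^ n) ^ d * (C * (p ^ n) ^ d / p ^ n * M) := by
        gcongr
        exact (norm_sum_sub_sum_le (hba n) hφM).trans (mul_le_mul_of_nonneg_right hsum hM0)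
    _ = M * C / (p ^ n : ℕ) := by
        rw [div_pow, one_pow, Nat.cast_pow]
        field_simp

end Comparison

section TightClosure

open Module

variable {k R : Type*} [Field k] [CommRing R] [Algebra k R]

lemma finrank_quotient_le_of_mul_mem {ι : Type*} [Fintype ι] {I : Ideal R}
    [Module.Finite k (R ⧸ I)] {z : ι → R} {c : R} (hc : ∀ i, c * z i ∈ I) :
    finrank k (R ⧸ I) ≤ finrank k (R ⧸ Ideal.span (Set.range z) ⊔ I) +
      Fintype.card ι * finrank k (R ⧸ Ideal.span {c} ⊔ I) := by
  let K := Ideal.span {c} ⊔ I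
  have : Module.Finite k (R ⧸ K) :=
    .of_surjective (Ideal.Quotient.factorₐ k (le_sup_right : I ≤ K)).toLinearMap
      (Ideal.Quotient.factor_surjective le_sup_right)
  have hK (i : ι) : K ≤ LinearMap.ker (LinearMap.toSpanSingleton R (R ⧸ I) (I.mkQ (z i))) := by
    refine sup_le ((Ideal.span_singleton_le_iff_mem _).mpr ?_) fun r hr ↦ ?_
    · exact (Submodule.Quotient.mk_eq_zero I).mpr (hc i)
    · exact (Submodule.Quotient.mk_eq_zero I).mpr (I.mul_mem_right _ hr)
  let f : (ι → R ⧸ K) →ₗ[R] R ⧸ I := ∑ i, K.liftQ _ (hK i) ∘ₗ LinearMap.proj i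
  let ψ := (Ideal.Quotient.factorₐ k (le_sup_right : I ≤ Ideal.span (Set.range z) ⊔ I)).toLinearMap
  have hψ : Function.Surjective ψ := Ideal.Quotient.factor_surjective le_sup_right
  have hker : LinearMap.ker ψ ≤ LinearMap.range (f.restrictScalars k) := by
    intro x hx
    obtain ⟨r, rfl⟩ := Ideal.Quotient.mk_surjective x
    obtain ⟨s, hs, i, hi, rfl⟩ := Submodule.mem_sup.mp (Ideal.Quotient.eq_zero_iff_mem.mp hx)
    obtain ⟨g, rfl⟩ := (Submodule.mem_span_range_iff_exists_fun R).mp hs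
    refine ⟨fun i ↦ K.mkQ (g i), ?_⟩
    rw [map_add, Ideal.Quotient.eq_zero_iff_mem.mpr hi, add_zero]
    simp only [f, LinearMap.restrictScalars_apply, LinearMap.sum_apply, LinearMap.comp_apply,
      LinearMap.proj_apply, Submodule.mkQ_apply, Submodule.liftQ_apply,
      LinearMap.toSpanSingleton_apply, map_sum]
    rfl
  have h1 := ψ.finrank_range_add_finrank_ker
  have h2 := Submodule.finrank_mono hker
  have h3 := (f.restrictScalars k).finrank_range_le
  rw [LinearMap.range_eq_top.mpr hψ, finrank_top] at h1
  rw [finrank_pi_fintype, Finset.sum_const, Finset.card_univ, smul_eq_mul] at h3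
  change _ ≤ _ + _ * finrank k (R ⧸ K)
  lia

variable {p : ℕ} {I J : Ideal R}

lemma exists_forall_mul_pow_mem_bracketPow {s : Finset R} (hs : ∀ z ∈ s, MemTightClosure p I z) :
    ∃ c : R, (∀ P ∈ minimalPrimes R, c ∉ P) ∧
      ∃ N, ∀ n ≥ N, ∀ z ∈ s, c * z ^ p ^ n ∈ bracketPow I (p ^ n) := by
  choose! c hc N hN using hs
  refine ⟨∏ z ∈ s, c z, fun P hP hmem ↦ ?_, s.sup N, fun n hn z hz ↦ ?_⟩
  · have := hP.1.1
    obtain ⟨z, hz, hcz⟩ := Ideal.IsPrime.prod_mem_iff.mp hmem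
    exact hc z hz P hP hcz
  · refine Ideal.mem_of_dvd _ (mul_dvd_mul_right (Finset.dvd_prod_of_mem c hz) _) ?_
    exact hN z hz n ((Finset.le_sup hz).trans hn)

lemma exists_mul_finrank_quotient_bracketPow_le [ExpChar R p] [Algebra.FiniteType k R] {d : ℕ}
    (hd : ringKrullDim R ≤ d) [Module.Finite k (R ⧸ I)] (hIJ : I ≤ J)
    (hJI : ∀ x ∈ J, MemTightClosure p I x) :
    ∃ C N : ℕ, ∀ n ≥ N, p ^ n * finrank k (R ⧸ bracketPow I (p ^ n)) ≤
      p ^ n * finrank k (R ⧸ bracketPow J (p ^ n)) + C * (p ^ n) ^ d := by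
  have : IsNoetherianRing R := Algebra.FiniteType.isNoetherianRing k R
  obtain ⟨s, rfl⟩ := IsNoetherian.noetherian J
  obtain ⟨c, hc, N, hN⟩ := exists_forall_mul_pow_mem_bracketPow fun z hz ↦
    hJI z (Submodule.subset_span hz)
  obtain ⟨C, hC⟩ := exists_mul_finrank_quotient_sup_bracketPow_le (k := k) I hd hc
  obtain ⟨_, hfin⟩ := exists_finrank_quotient_bracketPow_le (k := k) I hd
  refine ⟨s.card * C, N, fun n hn ↦ ?_⟩
  have := (hfin (p ^ n)).1
  have hle := finrank_quotient_le_of_mul_mem (k := k) (I := bracketPow I (p ^ n))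
    (z := fun z : s ↦ (z : R) ^ p ^ n) fun z ↦ hN n hn z z.2
  have hspan : Ideal.span (Set.range fun z : s ↦ (z : R) ^ p ^ n) ⊔ bracketPow I (p ^ n) =
      bracketPow (Ideal.span s) (p ^ n) := by
    rw [Set.range_comp' (· ^ p ^ n) Subtype.val, Subtype.range_coe, ← bracketPow_span]
    exact sup_eq_left.mpr (bracketPow_mono hIJ _)
  rw [hspan, Fintype.card_coe] at hle
  calc p ^ n * finrank k (R ⧸ bracketPow I (p ^ n))
      ≤ p ^ n * finrank k (R ⧸ bracketPow (Ideal.span (s : Set R)) (p ^ n)) +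
          s.card * (p ^ n * finrank k (R ⧸ Ideal.span {c} ⊔ bracketPow I (p ^ n))) := by
        rw [mul_left_comm, ← mul_add]
        gcongr
    _ ≤ _ := by
        rw [mul_assoc]
        exact add_le_add_right (Nat.mul_le_mul_left _ (hC _)) _

end TightClosure

section Graded

open Module

variable {k R : Type*} [Field k] [CommRing R] [Algebra k R]

lemma finrank_biSup_eq_sum_of_iSupIndep {V ι : Type*} [AddCommGroup V] [Module k V]
    [Module.Finite k V] {W : ι → Submodule k V} (hW : iSupIndep W) (s : Finset ι) :
    finrank k (⨆ i ∈ s, W i : Submodule k V) = ∑ i ∈ s, finrank k (W i) := by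
  classical
  induction s using Finset.induction_on with
  | empty => simp
  | insert i s hi ih =>
    have hdisj : Disjoint (W i) (⨆ j ∈ s, W j) := hW.disjoint_biSup (y := s) hi
    rw [Finset.iSup_insert, Finset.sum_insert hi, ← ih,
      ← Submodule.finrank_sup_add_finrank_inf_eq, hdisj.eq_bot, finrank_bot, add_zero]

section Decomposition

variable {ι : Type*} [DecidableEq ι] [AddMonoid ι] {𝒜 : ι → Submodule k R} [GradedAlgebra 𝒜]
  {I : Ideal R}

lemma iSupIndep_map_mkQ (hI : I.IsHomogeneous 𝒜) :
    iSupIndep fun i ↦ (𝒜 i).map (I.mkQ.restrictScalars k) := by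
  refine fun i ↦ Submodule.disjoint_def.mpr fun _ hi hne ↦ ?_
  simp only [← Submodule.map_iSup] at hne
  obtain ⟨a, ha, rfl⟩ := hi
  obtain ⟨b, hb, hba⟩ := hne
  have hproj : ⨆ j, ⨆ (_ : j ≠ i), 𝒜 j ≤ LinearMap.ker (GradedAlgebra.proj 𝒜 i) :=
    iSup₂_le fun j hj x hx ↦ DirectSum.decompose_of_mem_ne 𝒜 hx hj
  have hbi : GradedAlgebra.proj 𝒜 i b = 0 := hproj hb
  have hai : GradedAlgebra.proj 𝒜 i a = a := DirectSum.decompose_of_mem_same 𝒜 ha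
  have hmem : GradedAlgebra.proj 𝒜 i (b - a) ∈ I := hI i ((Submodule.Quotient.eq I).mp hba)
  rw [map_sub, hbi, hai, zero_sub, neg_mem_iff] at hmem
  exact (Submodule.Quotient.mk_eq_zero I).mpr hmem

lemma quotDim_eq_zero_of_notMem (hI : I.IsHomogeneous 𝒜) {s : Finset ι}
    (hs : (⨆ i ∈ s, 𝒜 i) ⊔ I.restrictScalars k = ⊤) {i : ι} (hi : i ∉ s) :
    quotDim (𝒜 i) I = 0 := by
  have hdisj : Disjoint ((𝒜 i).map (I.mkQ.restrictScalars k))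
      (⨆ j ∈ s, (𝒜 j).map (I.mkQ.restrictScalars k)) :=
    (iSupIndep_map_mkQ hI).disjoint_biSup (y := s) hi
  simp only [← Submodule.map_iSup] at hdisj
  rw [map_mkQ_eq_top hs, disjoint_top] at hdisj
  rw [quotDim, hdisj, finrank_bot]

variable [Module.Finite k (R ⧸ I)]

lemma quotDim_biSup (hI : I.IsHomogeneous 𝒜) (s : Finset ι) :
    quotDim (⨆ i ∈ s, 𝒜 i) I = ∑ i ∈ s, quotDim (𝒜 i) I := by
  have hmap : (⨆ i ∈ s, 𝒜 i).map (I.mkQ.restrictScalars k) =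
      ⨆ i ∈ s, (𝒜 i).map (I.mkQ.restrictScalars k) := by
    simp only [← Submodule.map_iSup]
  rw [quotDim, hmap]
  exact finrank_biSup_eq_sum_of_iSupIndep (iSupIndep_map_mkQ hI) s

lemma finite_setOf_not_le (hI : I.IsHomogeneous 𝒜) :
    {i | ¬ 𝒜 i ≤ I.restrictScalars k}.Finite := by
  have hfin : {i | (𝒜 i).map (I.mkQ.restrictScalars k) ≠ ⊥}.Finite :=
    Set.finite_coe_iff.mp
      (@Finite.of_fintype _ (iSupIndep_map_mkQ hI).fintypeNeBotOfFiniteDimensional)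
  refine hfin.subset fun i hi hbot ↦ hi ?_
  exact fun x hx ↦ (Submodule.Quotient.mk_eq_zero I).mp
    ((Submodule.mem_bot k).mp (hbot ▸ Submodule.mem_map_of_mem hx))

end Decomposition

lemma sum_Icc_zero_natCast {M : Type*} [AddCommMonoid M] (f : ℤ → M) (t : ℕ) :
    ∑ j ∈ Finset.Icc (0 : ℤ) t, f j = ∑ j ∈ Finset.Icc 0 t, f (j : ℕ) := by
  classical
  have himage : (Finset.Icc 0 t).image Nat.cast = Finset.Icc (0 : ℤ) t := by
    ext j
    rw [← Finset.mem_coe, Finset.coe_image, Finset.coe_Icc, Nat.image_cast_int_Icc, Nat.cast_zero,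
      Set.mem_Icc, Finset.mem_Icc]
  rw [← himage, Finset.sum_image Nat.cast_injective.injOn]

section Generators

variable {𝒜 : ℤ → Submodule k R} [GradedAlgebra 𝒜] {σ : Type*} [Fintype σ] {x : σ → R}
  {w : σ → ℕ}

lemma prod_pow_mem (hx : ∀ i, x i ∈ 𝒜 (w i)) (α : σ → ℕ) :
    ∏ i, x i ^ α i ∈ 𝒜 (∑ i, α i * w i : ℕ) := by
  simpa only [Nat.cast_sum, Nat.cast_mul, nsmul_eq_mul] using
    SetLike.prod_pow_mem_graded 𝒜 (F := Finset.univ) (fun i ↦ (w i : ℤ)) x α fun i _ ↦ hx i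

lemma monomialSpan_eq_biSup (hx : ∀ i, x i ∈ 𝒜 (w i)) (hadj : Algebra.adjoin k (Set.range x) = ⊤)
    (t : ℕ) : monomialSpan k x w t = ⨆ j ∈ Finset.Icc (0 : ℤ) t, 𝒜 j := by
  refine le_antisymm (Submodule.span_le.mpr ?_) (iSup₂_le fun j hj a ha ↦ ?_)
  · rintro _ ⟨α, hα, rfl⟩
    have hmem := Finset.mem_Icc.mpr ⟨Int.natCast_nonneg _, Int.ofNat_le.mpr hα⟩
    exact Submodule.mem_iSup_of_mem _ (Submodule.mem_iSup_of_mem hmem (prod_pow_mem hx α))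
  · obtain ⟨s, hs⟩ := exists_mem_monomialSpan hadj w a
    have hle : monomialSpan k x w s ≤ (monomialSpan k x w t).comap (GradedAlgebra.proj 𝒜 j) := by
      refine Submodule.span_le.mpr ?_
      rintro _ ⟨α, -, rfl⟩
      change GradedAlgebra.proj 𝒜 j _ ∈ monomialSpan k x w t
      rw [GradedAlgebra.proj_apply]
      by_cases h : (∑ i, α i * w i : ℕ) = j
      · subst h
        rw [DirectSum.decompose_of_mem_same 𝒜 (prod_pow_mem hx α)]
        exact prod_pow_mem_monomialSpan (Int.ofNat_le.mp (Finset.mem_Icc.mp hj).2)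
      · rw [DirectSum.decompose_of_mem_ne 𝒜 (prod_pow_mem hx α) h]
        exact zero_mem _
    have ha' : GradedAlgebra.proj 𝒜 j a = a := DirectSum.decompose_of_mem_same 𝒜 ha
    exact ha' ▸ hle hs

lemma quotDim_monomialSpan (hx : ∀ i, x i ∈ 𝒜 (w i)) (hadj : Algebra.adjoin k (Set.range x) = ⊤)
    {I : Ideal R} (hI : I.IsHomogeneous 𝒜) [Module.Finite k (R ⧸ I)] (t : ℕ) :
    quotDim (monomialSpan k x w t) I = ∑ j ∈ Finset.Icc 0 t, quotDim (𝒜 j) I := by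
  rw [monomialSpan_eq_biSup hx hadj, quotDim_biSup hI, sum_Icc_zero_natCast]

lemma exists_monomialSpan_sup_bracketPow_eq_top (hx : ∀ i, x i ∈ 𝒜 (w i))
    (hadj : Algebra.adjoin k (Set.range x) = ⊤) {I : Ideal R} (hI : I.IsHomogeneous 𝒜)
    [Module.Finite k (R ⧸ I)] :
    ∃ A : ℕ, ∀ q, monomialSpan k x w (A * q) ⊔ (bracketPow I q).restrictScalars k = ⊤ := by
  obtain ⟨N, hN⟩ := (finite_setOf_not_le hI).bddAbove
  let m := N.toNat + 1
  have hpow (i : σ) (hi : 0 < w i) : x i ^ m ∈ I := by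
    have hmem : x i ^ m ∈ 𝒜 (m * w i : ℕ) := by
      simpa only [Nat.cast_mul, nsmul_eq_mul] using SetLike.pow_mem_graded m (hx i)
    by_contra hnot
    have hle : ((m * w i : ℕ) : ℤ) ≤ N := hN fun hsub ↦ hnot (hsub hmem)
    have : m ≤ m * w i := Nat.le_mul_of_pos_right m hi
    lia
  refine ⟨∑ i, m * w i, fun q ↦ top_le_iff.mp fun r _ ↦ ?_⟩
  obtain ⟨t, ht⟩ := exists_mem_monomialSpan hadj w r
  refine (Submodule.span_le.mpr ?_ : monomialSpan k x w t ≤ _) ht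
  rintro _ ⟨α, -, rfl⟩
  by_cases hα : ∑ i, α i * w i ≤ (∑ i, m * w i) * q
  · exact Submodule.mem_sup_left (prod_pow_mem_monomialSpan hα)
  · rw [not_le, Finset.sum_mul] at hα
    obtain ⟨i, -, hi⟩ := Finset.exists_lt_of_sum_lt hα
    rw [mul_right_comm] at hi
    have hwi : 0 < w i := Nat.pos_of_mul_pos_left (Nat.zero_lt_of_lt hi)
    have hxi : x i ^ α i ∈ bracketPow I q := by
      refine Ideal.mem_of_dvd _ (pow_dvd_pow _ (Nat.lt_of_mul_lt_mul_right hi).le) ?_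
      rw [pow_mul]
      exact pow_mem_bracketPow q (hpow i hwi)
    exact Submodule.mem_sup_right
      (Ideal.mem_of_dvd _ (Finset.dvd_prod_of_mem _ (Finset.mem_univ i)) hxi)

end Generators

lemma isHomogeneous_bracketPow {ι : Type*} [DecidableEq ι] [AddMonoid ι] {𝒜 : ι → Submodule k R}
    [GradedAlgebra 𝒜] {p : ℕ} [ExpChar R p] {I : Ideal R} (hI : I.IsHomogeneous 𝒜) (n : ℕ) :
    (bracketPow I (p ^ n)).IsHomogeneous 𝒜 := by
  obtain ⟨S, rfl⟩ := (Ideal.IsHomogeneous.iff_exists 𝒜 I).mp hI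
  rw [bracketPow_span]
  refine Ideal.homogeneous_span _ _ ?_
  rintro _ ⟨_, ⟨⟨z, i, hz⟩, -, rfl⟩, rfl⟩
  exact ⟨p ^ n • i, SetLike.pow_mem_graded _ hz⟩

end Graded

section HilbertFunction

open Module Topology

variable {k R : Type*} [Field k] [CommRing R] [Algebra k R] {I J : Ideal R}

lemma exists_finset_adjoin_eq_top [Algebra.FiniteType k R] (𝒜 : ℤ → Submodule k R)
    [GradedAlgebra 𝒜] (hneg : ∀ j < 0, 𝒜 j = ⊥) :
    ∃ (s : Finset R) (w : s → ℕ), (∀ x : s, (x : R) ∈ 𝒜 (w x)) ∧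
      Algebra.adjoin k (s : Set R) = ⊤ := by
  classical
  obtain ⟨s, hs⟩ := Algebra.FiniteType.out (R := k) (A := R)
  let T := s.biUnion fun r ↦
    (DirectSum.decompose 𝒜 r).support.image fun j ↦ (DirectSum.decompose 𝒜 r j : R)
  have hT : ∀ x : T, ∃ n : ℕ, (x : R) ∈ 𝒜 n := by
    rintro ⟨x, hx⟩
    obtain ⟨r, -, hx⟩ := Finset.mem_biUnion.mp hx
    obtain ⟨j, -, rfl⟩ := Finset.mem_image.mp hx
    have hj := (DirectSum.decompose 𝒜 r j).2
    rcases lt_or_ge j 0 with hj0 | hj0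
    · have hzero : (DirectSum.decompose 𝒜 r j : R) = 0 := (Submodule.mem_bot k).mp (hneg j hj0 ▸ hj)
      exact ⟨0, hzero ▸ zero_mem _⟩
    · exact ⟨j.toNat, by rwa [Int.toNat_of_nonneg hj0]⟩
  choose w hw using hT
  refine ⟨T, w, hw, top_le_iff.mp (hs ▸ Algebra.adjoin_le fun r hr ↦ ?_)⟩
  rw [← DirectSum.sum_support_decompose 𝒜 r]
  refine sum_mem fun j hj ↦ Algebra.subset_adjoin ?_
  exact Finset.mem_biUnion.mpr ⟨r, hr, Finset.mem_image_of_mem _ hj⟩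

variable {𝒜 : ℤ → Submodule k R} [GradedAlgebra 𝒜]

lemma sum_quotDim_eq_quotDim_biSup [Module.Finite k (R ⧸ I)] (hI : I.IsHomogeneous 𝒜) (t : ℕ) :
    ∑ j ∈ Finset.Icc 0 t, quotDim (𝒜 j) I = quotDim (⨆ j ∈ Finset.Icc (0 : ℤ) t, 𝒜 j) I := by
  rw [quotDim_biSup hI, sum_Icc_zero_natCast]

lemma FnGen_eq_sum {p n t : ℕ} (hI : (bracketPow I (p ^ n)).IsHomogeneous 𝒜)
    (ht : (⨆ j ∈ Finset.Icc (0 : ℤ) t, 𝒜 j) ⊔ (bracketPow I (p ^ n)).restrictScalars k = ⊤)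
    (d : ℕ) (y : ℂ) :
    FnGen k 𝒜 I p d n y = (1 / (p : ℂ) ^ n) ^ d * ∑ j ∈ Finset.Icc 0 t,
      (quotDim (𝒜 j) (bracketPow I (p ^ n)) : ℂ) *
        Complex.exp (-Complex.I * y * ((j / p ^ n : ℝ) : ℂ)) := by
  have hquot (j : ℤ) : quotPieceDim k (R := R) 𝒜 (bracketPow I (p ^ n) • ⊤) j =
      quotDim (𝒜 j) (bracketPow I (p ^ n)) := by
    rw [smul_eq_mul, Ideal.mul_top]
    rfl
  rw [FnGen, tsum_eq_sum (s := Finset.Icc (0 : ℤ) t), sum_Icc_zero_natCast]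
  · simp only [hquot]
    congr! 4 with j
    push_cast
    ring
  · intro j hj
    rw [hquot, quotDim_eq_zero_of_notMem hI ht hj, Nat.cast_zero, zero_mul]

variable [Algebra.FiniteType k R]

lemma exists_biSup_sup_bracketPow_eq_top (hneg : ∀ j < 0, 𝒜 j = ⊥) (hI : I.IsHomogeneous 𝒜)
    [Module.Finite k (R ⧸ I)] :
    ∃ A : ℕ, ∀ q : ℕ, (⨆ j ∈ Finset.Icc (0 : ℤ) (A * q : ℕ), 𝒜 j) ⊔
      (bracketPow I q).restrictScalars k = ⊤ := by
  obtain ⟨s, w, hw, hs⟩ := exists_finset_adjoin_eq_top 𝒜 hneg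
  have hadj : Algebra.adjoin k (Set.range ((↑) : s → R)) = ⊤ := by rwa [Subtype.range_coe]
  simp only [← monomialSpan_eq_biSup hw hadj]
  exact exists_monomialSpan_sup_bracketPow_eq_top hw hadj hI

lemma exists_pow_mul_sum_quotDim_succ_le {p d : ℕ} (hp : p.Prime) [ExpChar k p]
    (hneg : ∀ j < 0, 𝒜 j = ⊥) (hd : ringKrullDim R ≤ d) [Module.Finite k (R ⧸ I)]
    (hI : ∀ n, (bracketPow I (p ^ n)).IsHomogeneous 𝒜) :
    ∃ C e : ℕ, ∀ n ≥ e, ∀ t,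
      p ^ (n + 1) * ∑ j ∈ Finset.Icc 0 (p * t + (p - 1)),
          quotDim (𝒜 j) (bracketPow I (p ^ (n + 1))) ≤
        p ^ (n + 1) * (p ^ d * ∑ j ∈ Finset.Icc 0 (t + C), quotDim (𝒜 j) (bracketPow I (p ^ n))) +
          C * (p ^ (n + 1)) ^ d := by
  obtain ⟨s, w, hw, hs⟩ := exists_finset_adjoin_eq_top 𝒜 hneg
  have hadj : Algebra.adjoin k (Set.range ((↑) : s → R)) = ⊤ := by rwa [Subtype.range_coe]
  obtain ⟨C, e, hrec⟩ := exists_pow_mul_quotDim_succ_le hp hd hadj w I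
  obtain ⟨D, hD⟩ := exists_finrank_quotient_bracketPow_le (k := k) I hd
  have (q : ℕ) : Module.Finite k (R ⧸ bracketPow I q) := (hD q).1
  simp only [← quotDim_monomialSpan hw hadj (hI _)]
  exact ⟨C, e, hrec⟩

theorem exists_tendsto_FnGen {p d : ℕ} (hp : p.Prime) [ExpChar k p] [ExpChar R p]
    (hneg : ∀ j < 0, 𝒜 j = ⊥) (hd : ringKrullDim R ≤ d) [Module.Finite k (R ⧸ I)]
    (hI : I.IsHomogeneous 𝒜) (y : ℂ) :
    ∃ L, Tendsto (fun n ↦ FnGen k 𝒜 I p d n y) atTop (𝓝 L) := by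
  obtain ⟨A, hA⟩ := exists_biSup_sup_bracketPow_eq_top hneg hI
  obtain ⟨D, hD⟩ := exists_finrank_quotient_bracketPow_le (k := k) I hd
  obtain ⟨C, e, hrec⟩ := exists_pow_mul_sum_quotDim_succ_le hp hneg hd
    (isHomogeneous_bracketPow hI)
  have hbracket (n : ℕ) := isHomogeneous_bracketPow (p := p) hI n
  simp only [FnGen_eq_sum (hbracket _) (hA _)]
  refine exists_tendsto_sum_of_recursion hp.two_le (D := D) (fun n j hj ↦ ?_) (fun n t ↦ ?_) hrec
    (φ := fun s ↦ Complex.exp (-Complex.I * y * (s : ℂ))) ?_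
  · refine quotDim_eq_zero_of_notMem (hbracket n) (hA _) fun hmem ↦ hj.not_ge ?_
    exact Int.ofNat_le.mp (Finset.mem_Icc.mp hmem).2
  · have := (hD (p ^ n)).1
    rw [sum_quotDim_eq_quotDim_biSup (hbracket n)]
    exact quotDim_le_finrank.trans (hD _).2
  · exact (contDiff_const.mul Complex.ofRealCLM.contDiff).cexp

theorem tendsto_FnGen_sub_FnGen {p d : ℕ} (hp : p.Prime) [ExpChar R p]
    (hneg : ∀ j < 0, 𝒜 j = ⊥) (hd : ringKrullDim R ≤ d) [Module.Finite k (R ⧸ I)]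
    (hIJ : I ≤ J) (hI : I.IsHomogeneous 𝒜) (hJ : J.IsHomogeneous 𝒜)
    (hJI : ∀ x ∈ J, MemTightClosure p I x) (y : ℂ) :
    Tendsto (fun n ↦ FnGen k 𝒜 I p d n y - FnGen k 𝒜 J p d n y) atTop (𝓝 0) := by
  obtain ⟨A, hA⟩ := exists_biSup_sup_bracketPow_eq_top hneg hI
  obtain ⟨D, hD⟩ := exists_finrank_quotient_bracketPow_le (k := k) I hd
  obtain ⟨C, N, hle⟩ := exists_mul_finrank_quotient_bracketPow_le (k := k) hd hIJ hJI
  have hfin (n : ℕ) : Module.Finite k (R ⧸ bracketPow I (p ^ n)) := (hD (p ^ n)).1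
  have hmono (n : ℕ) : bracketPow I (p ^ n) ≤ bracketPow J (p ^ n) := bracketPow_mono hIJ _
  have hAJ (n : ℕ) : (⨆ j ∈ Finset.Icc (0 : ℤ) (A * p ^ n : ℕ), 𝒜 j) ⊔
      (bracketPow J (p ^ n)).restrictScalars k = ⊤ :=
    top_le_iff.mp ((hA (p ^ n)).ge.trans
      (sup_le_sup_left (Submodule.restrictScalars_mono k (hmono n)) _))
  have hIn (n : ℕ) := isHomogeneous_bracketPow (p := p) hI n
  have hJn (n : ℕ) := isHomogeneous_bracketPow (p := p) hJ n
  simp only [FnGen_eq_sum (hIn _) (hA _), FnGen_eq_sum (hJn _) (hAJ _)]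
  refine tendsto_sum_sub_sum_zero hp.two_le (C := C) (N := N) (fun n j ↦ quotDim_anti (hmono n))
    (fun n hn ↦ ?_) (φ := fun s ↦ Complex.exp (-Complex.I * y * (s : ℂ))) (by fun_prop)
  have : Module.Finite k (R ⧸ bracketPow J (p ^ n)) :=
    .of_surjective (Ideal.Quotient.factorₐ k (hmono n)).toLinearMap
      (Ideal.Quotient.factor_surjective (hmono n))
  rw [sum_quotDim_eq_quotDim_biSup (hIn n), sum_quotDim_eq_quotDim_biSup (hJn n),
    quotDim_eq_finrank (hA _), quotDim_eq_finrank (hAJ n)]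
  exact hle n hn

lemma finite_of_isFiniteLength (hI : IsFiniteLength R (R ⧸ I)) : Module.Finite k (R ⧸ I) := by
  have : IsArtinian R (R ⧸ I) := (isFiniteLength_iff_isNoetherian_isArtinian.mp hI).2
  have : IsArtinianRing (R ⧸ I) := isArtinian_of_tower R this
  exact Module.finite_of_isArtinianRing k (R ⧸ I)

end HilbertFunction

end FrobeniusPoincare

open FrobeniusPoincare in
theorem frobenius_poincare_tight_closure_general
    {k R : Type*} [Field k] [CommRing R] [Algebra k R] [Algebra.FiniteType k R]
    {p : ℕ} (hp : p.Prime) [CharP R p] {𝒜 : ℤ → Submodule k R} [GradedAlgebra 𝒜]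
    (h𝒜neg : ∀ t < 0, 𝒜 t = ⊥) {d : ℕ} (hd : ringKrullDim R = d) {I J : Ideal R} (hIJ : I ≤ J)
    (hI : I.IsHomogeneous 𝒜) (hJ : J.IsHomogeneous 𝒜) (hIfl : IsFiniteLength R (R ⧸ I))
    (hJI : ∀ x ∈ J, MemTightClosure p I x) (y : ℂ) :
    ∃ L : ℂ,
      Tendsto (fun n ↦ FnGen k 𝒜 I p d n y) atTop (nhds L) ∧
      Tendsto (fun n ↦ FnGen k 𝒜 J p d n y) atTop (nhds L) := by
  have : Nontrivial R := by
    by_contra h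
    rw [not_nontrivial_iff_subsingleton] at h
    rw [ringKrullDim_eq_bot_of_subsingleton] at hd
    exact WithBot.bot_ne_natCast d hd
  have : CharP k p := (RingHom.charP_iff (algebraMap k R) (algebraMap k R).injective p).mpr ‹_›
  have : ExpChar k p := .prime hp
  have : ExpChar R p := .prime hp
  have : Module.Finite k (R ⧸ I) := finite_of_isFiniteLength hIfl
  obtain ⟨L, hL⟩ := exists_tendsto_FnGen hp h𝒜neg hd.le hI y
  refine ⟨L, hL, ?_⟩
  simpa only [sub_sub_cancel, sub_zero] using
    hL.sub (tendsto_FnGen_sub_FnGen hp h𝒜neg hd.le hIJ hI hJ hJI y)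

/-- **The Frobenius–Poincaré function depends only on the tight closure:**
if `I ⊆ J ⊆ I*` are homogeneous ideals with `R/I` of finite length, then
`F(R,R,I) = F(R,R,J)`. -/
theorem frobenius_poincare_tight_closure
    (k R : Type) [Field k] [CommRing R] [Algebra k R] [Algebra.FiniteType k R]
    (p : ℕ) (hp : p.Prime) [CharP R p]
    (𝒜 : ℤ → Submodule k R) [GradedAlgebra 𝒜]
    (h𝒜neg : ∀ t : ℤ, t < 0 → 𝒜 t = ⊥)
    (h𝒜zero : ∀ x ∈ 𝒜 0, ∃ c : k, algebraMap k R c = x)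
    (d : ℕ) (hd : ringKrullDim R = d)
    (I J : Ideal R) (hIJ : I ≤ J)
    (hI : Ideal.IsHomogeneous 𝒜 I) (hJ : Ideal.IsHomogeneous 𝒜 J)
    (hIfl : IsFiniteLength R (R ⧸ I))
    (hJI : ∀ x ∈ J, MemTightClosure p I x)
    (y : ℂ) :
    ∃ L : ℂ,
      Tendsto (fun n : ℕ => FnGen k 𝒜 I p d n y) atTop (nhds L) ∧
      Tendsto (fun n : ℕ => FnGen k 𝒜 J p d n y) atTop (nhds L) := by
  exact frobenius_poincare_tight_closure_general hp h𝒜neg hd hIJ hI hJ hIfl hJI y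

end
end

section
/- Let I ⊆ J be two homogeneous ideals of R with R/I of finite length, and suppose that all minimal prime ideals P of R satisfy dim(R/P) = dim R. If F(R,R,I)(y) = F(R,R,J)(y) for every complex number y, then J is contained in the tight closure I* of I. -/
/-!
Let `A = k[T₁, …, T_d] ⊆ R` be a Noether normalization. For `e₀` large the Frobenius power
`r ↦ r^{p^{e₀}}` maps `R` into `A[R^{p^{e₀}}]`, which is generically étale over `A`, so that every
`p⁻ᵉ`-linear `ψ : A → A` extends to `A[R^{p^{e₀}}]` up to a nonzero factor `c ∈ A` that does not
depend on `e`. This yields additive maps `Ψ : R → R` with `Ψ(a) = c ψ(a^{p^{e₀}})` on `A` that send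
each `I^{[p^{e + m}]}` into `I^{[p^{e₀ + m}]}`.

Since some `p⁻ᵉ`-linear map sends a given nonzero polynomial of degree less than
`p^e` in every variable to `1`, there is a colon estimate: if `x ∈ J`, `q ≥ p^{e₀}` and
`c x^q ∉ I^{[q]}`, then no nonzero `f ∈ A` of degree less than `q'` in every variable satisfies
`f x^{qq'} ∈ I^{[qq']}`. Hence the length of `J^{[qq']} / I^{[qq']}` is at least `q'^d` for
all `q'`, and the Hilbert–Kunz multiplicities of `I` and `J`, which are the values of the
Frobenius–Poincaré functions at `y = 0`, differ. Equidimensionality ensures that `c` lies in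
no minimal prime of `R`.
-/

open Filter Complex

noncomputable section

section TorsionClosure

variable {A M : Type*} [CommRing A] [AddCommGroup M] [Module A M]

/-- The preimage of the torsion of `M ⧸ N`; for a domain `A` with fraction field `K` this is the
set of elements of `M` whose image in `K ⊗ M` lies in the `K`-span of `N`. -/
def torsionClosure (N : Submodule A M) : Submodule A M :=
  (Submodule.torsion A (M ⧸ N)).comap N.mkQ

lemma torsionClosure_eq_top_iff_isTorsion {N : Submodule A M} :
    torsionClosure N = ⊤ ↔ Module.IsTorsion A (M ⧸ N) := by
  refine ⟨fun h x => ?_, fun h => Submodule.eq_top_iff'.2 fun x => ?_⟩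
  · obtain ⟨x, rfl⟩ := N.mkQ_surjective x
    exact (Submodule.mem_torsion_iff _).1 (show x ∈ torsionClosure N from h ▸ Submodule.mem_top)
  · exact (Submodule.mem_torsion_iff _).2 (@h _)

variable [IsDomain A]

lemma mem_torsionClosure {N : Submodule A M} {x : M} :
    x ∈ torsionClosure N ↔ ∃ c : A, c ≠ 0 ∧ c • x ∈ N := by
  simp only [torsionClosure, Submodule.mem_comap, Submodule.mem_torsion_iff, Submodule.mkQ_apply,
    Subtype.exists, Submonoid.mk_smul, mem_nonZeroDivisors_iff_ne_zero, exists_prop,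
    ← Submodule.Quotient.mk_smul, Submodule.Quotient.mk_eq_zero]

lemma le_torsionClosure (N : Submodule A M) : N ≤ torsionClosure N := fun x hx =>
  mem_torsionClosure.2 ⟨1, one_ne_zero, by rwa [one_smul]⟩

lemma torsionClosure_le_torsionClosure {N N' : Submodule A M} (h : N ≤ torsionClosure N') :
    torsionClosure N ≤ torsionClosure N' := by
  intro x hx
  obtain ⟨c, hc, hcx⟩ := mem_torsionClosure.1 hx
  obtain ⟨c', hc', hcx'⟩ := mem_torsionClosure.1 (h hcx)
  exact mem_torsionClosure.2 ⟨c' * c, mul_ne_zero hc' hc, by rwa [mul_smul]⟩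

lemma exists_ne_zero_forall_smul_mem [Module.Finite A M] {N : Submodule A M}
    (hN : torsionClosure N = ⊤) : ∃ c : A, c ≠ 0 ∧ ∀ x : M, c • x ∈ N := by
  obtain ⟨c, hc, hc0⟩ :=
    Submodule.annihilator_top_inter_nonZeroDivisors (torsionClosure_eq_top_iff_isTorsion.1 hN)
  refine ⟨c, nonZeroDivisors.ne_zero hc0, fun x => ?_⟩
  rw [← Submodule.Quotient.mk_eq_zero, Submodule.Quotient.mk_smul]
  exact Submodule.mem_annihilator.1 hc _ Submodule.mem_top

lemma torsionClosure_span_eq_top_of_linearIndependent {ι : Type*} [Finite ι] {v w : ι → M}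
    (hv : LinearIndependent A v) (hw : LinearIndependent A w)
    (hv_top : torsionClosure (Submodule.span A (Set.range v)) = ⊤) :
    torsionClosure (Submodule.span A (Set.range w)) = ⊤ := by
  rw [torsionClosure_eq_top_iff_isTorsion, ← Module.rank_eq_zero_iff_isTorsion] at hv_top ⊢
  have hvM := rank_quotient_add_rank_of_isDomain (Submodule.span A (Set.range v))
  have hwM := rank_quotient_add_rank_of_isDomain (Submodule.span A (Set.range w))
  have hvw : Cardinal.mk (Set.range v) = Cardinal.mk (Set.range w) :=
    Cardinal.mk_congr
      ((Equiv.ofInjective v hv.injective).symm.trans (Equiv.ofInjective w hw.injective))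
  rw [rank_span hv, hv_top, zero_add, hvw] at hvM
  rw [rank_span hw, ← hvM] at hwM
  exact (Cardinal.add_right_inj_of_lt_aleph0 (Set.finite_range w).lt_aleph0).1
    (hwM.trans (zero_add _).symm)

end TorsionClosure

section FrobeniusBasis

variable {A R : Type*} [CommRing A] [CommRing R] [Algebra A R]

lemma pow_mem_span_image_pow (p : ℕ) [Fact p.Prime] [CharP R p] (e : ℕ) {s : Set R} {x : R}
    (hx : x ∈ Submodule.span A s) : x ^ p ^ e ∈ Submodule.span A ((· ^ p ^ e) '' s) := by
  induction hx using Submodule.span_induction with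
  | mem x hx => exact Submodule.subset_span ⟨x, hx, rfl⟩
  | zero => simp [(Fact.out : p.Prime).ne_zero]
  | add x y _ _ hx hy => rw [add_pow_char_pow]; exact add_mem hx hy
  | smul a x _ hx => rw [smul_pow]; exact Submodule.smul_mem _ _ hx

lemma pow_mem_torsionClosure_span_image_pow [IsDomain A] (p : ℕ) [Fact p.Prime] [CharP R p] (e : ℕ)
    {s : Set R} {x : R} (hx : x ∈ torsionClosure (Submodule.span A s)) :
    x ^ p ^ e ∈ torsionClosure (Submodule.span A ((· ^ p ^ e) '' s)) := by
  obtain ⟨c, hc, hcx⟩ := mem_torsionClosure.1 hx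
  refine mem_torsionClosure.2 ⟨c ^ p ^ e, pow_ne_zero _ hc, ?_⟩
  rw [← smul_pow]
  exact pow_mem_span_image_pow p e hcx

variable (A R) in
lemma exists_linearIndepOn_pow [IsDomain A] [Module.Finite A R] (p : ℕ) [Fact p.Prime]
    [CharP R p] : ∃ (e₀ : ℕ) (t : Set R), t.Finite ∧
      (∀ r : R, r ^ p ^ e₀ ∈ torsionClosure (Submodule.span A ((· ^ p ^ e₀) '' t))) ∧
      ∀ e, LinearIndepOn A (· ^ p ^ (e₀ + e)) t := by
  let P : ℕ × Set R → Prop := fun ⟨e, t⟩ => t.Finite ∧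
    ∀ r : R, r ^ p ^ e ∈ torsionClosure (Submodule.span A ((· ^ p ^ e) '' t))
  have hP : ∃ et, P et := by
    obtain ⟨t, ht⟩ := (Module.Finite.fg_top : (⊤ : Submodule A R).FG)
    refine ⟨(0, t), t.finite_toSet, fun r => le_torsionClosure _ ?_⟩
    simp [ht]
  -- For `t` of least size no `p`-th powers of a proper subset can still span generically.
  obtain ⟨⟨e₀, t⟩, ⟨ht, hspan⟩, hmin⟩ := exists_minimalFor_of_wellFoundedLT P (·.2.ncard) hP
  refine ⟨e₀, t, ht, hspan, fun e => ?_⟩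
  obtain ⟨s, hs, hmax⟩ := exists_maximal_linearIndepOn A fun x : t => (x : R) ^ p ^ (e₀ + e)
  have hle : Submodule.span A ((· ^ p ^ (e₀ + e)) '' t) ≤
      torsionClosure (Submodule.span A ((· ^ p ^ (e₀ + e)) '' (Subtype.val '' s))) := by
    rw [Submodule.span_le]
    rintro _ ⟨x, hx, rfl⟩
    by_cases hxs : ⟨x, hx⟩ ∈ s
    · exact le_torsionClosure _ (Submodule.subset_span ⟨x, ⟨⟨x, hx⟩, hxs, rfl⟩, rfl⟩)
    · simpa [mem_torsionClosure, Set.image_image] using hmax _ hxs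
  have hPs : P (e₀ + e, Subtype.val '' s) := by
    refine ⟨ht.subset (Subtype.coe_image_subset t s), fun r => ?_⟩
    refine torsionClosure_le_torsionClosure hle ?_
    simpa only [Set.image_image, ← pow_mul, ← pow_add] using
      pow_mem_torsionClosure_span_image_pow p e (hspan r)
  have hst : Subtype.val '' s = t :=
    Set.eq_of_subset_of_ncard_le (Subtype.coe_image_subset t s)
      (hmin (j := (e₀ + e, Subtype.val '' s)) hPs
        (Set.ncard_le_ncard (Subtype.coe_image_subset t s) ht)) ht
  have hs_univ : s = Set.univ :=
    Subtype.val_injective.image_injective (by rw [hst, Set.image_univ, Subtype.range_coe])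
  rwa [hs_univ, linearIndepOn_univ_iff] at hs

/-- The subalgebra `A[R^q]` of `R` generated by the `q`-th powers; for `q` a large power of the
characteristic it replaces `R` by an algebra that is generically étale over `A`. -/
def adjoinPow (A R : Type*) [CommRing A] [CommRing R] [Algebra A R] (q : ℕ) : Subalgebra A R :=
  Algebra.adjoin A (Set.range (· ^ q))

lemma pow_mem_adjoinPow (r : R) (q : ℕ) : r ^ q ∈ adjoinPow A R q :=
  Algebra.subset_adjoin ⟨r, rfl⟩

lemma toSubmodule_adjoinPow (q : ℕ) :
    Subalgebra.toSubmodule (adjoinPow A R q) = Submodule.span A (Set.range (· ^ q)) := by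
  rw [adjoinPow, Algebra.adjoin_eq_span]
  exact congrArg _ (congrArg _ (MonoidHom.mrange (powMonoidHom q : R →* R)).closure_eq)

/-- A family whose `p^e`-th powers are, for `e = 0`, a basis after inverting a nonzero element of
the domain `A`, and are linearly independent for all `e`. Such a family witnesses that the algebra
is generically étale over `A`. -/
structure IsFrobeniusBasis (A : Type*) {S ι : Type*} [CommRing A] [CommRing S] [Algebra A S]
    (p : ℕ) (b : ι → S) : Prop where
  linearIndependent_pow (e : ℕ) : LinearIndependent A fun i => b i ^ p ^ e
  torsionClosure_span : torsionClosure (Submodule.span A (Set.range b)) = ⊤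

variable (A R) in
lemma exists_isFrobeniusBasis_adjoinPow [IsDomain A] [Module.Finite A R] (p : ℕ) [Fact p.Prime]
    [CharP R p] : ∃ (e₀ : ℕ) (t : Set R) (b : t → adjoinPow A R (p ^ e₀)), t.Finite ∧
      IsFrobeniusBasis A p b := by
  obtain ⟨e₀, t, ht, hspan, hli⟩ := exists_linearIndepOn_pow A R p
  let S := adjoinPow A R (p ^ e₀)
  let b : t → S := fun x => ⟨x ^ p ^ e₀, pow_mem_adjoinPow _ _⟩
  refine ⟨e₀, t, b, ht, ⟨fun e => ?_, Submodule.eq_top_iff'.2 fun s => ?_⟩⟩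
  · refine LinearIndependent.of_comp S.val.toLinearMap ?_
    simpa [Function.comp_def, b, ← pow_mul, ← pow_add, LinearIndepOn] using hli e
  · have hs : (s : R) ∈ torsionClosure (Submodule.span A ((· ^ p ^ e₀) '' t)) := by
      have hle : Submodule.span A (Set.range (· ^ p ^ e₀)) ≤
          torsionClosure (Submodule.span A ((· ^ p ^ e₀) '' t)) :=
        Submodule.span_le.2 (Set.range_subset_iff.2 hspan)
      rw [← toSubmodule_adjoinPow] at hle
      exact hle s.2
    obtain ⟨c, hc, hcs⟩ := mem_torsionClosure.1 hs
    have hmap : (Submodule.span A (Set.range b)).map S.val.toLinearMap =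
        Submodule.span A ((· ^ p ^ e₀) '' t) := by
      rw [Submodule.map_span, ← Set.range_comp, Set.image_eq_range]
      rfl
    rw [← hmap] at hcs
    obtain ⟨s', hs', hss'⟩ := hcs
    refine mem_torsionClosure.2 ⟨c, hc, ?_⟩
    rwa [show c • s = s' from Subtype.val_injective hss'.symm]

lemma IsFrobeniusBasis.exists_pow_smul_mem_span [IsDomain A] {S ι : Type*} [Finite ι] [CommRing S]
    [Algebra A S] [Module.Finite A S] {p : ℕ} [Fact p.Prime] [CharP S p] {b : ι → S}
    (hb : IsFrobeniusBasis A p b) : ∃ d : A, d ≠ 0 ∧ ∀ (e : ℕ) (s : S),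
      d ^ p ^ e • s ∈ Submodule.span A (Set.range fun i => b i ^ p ^ e) := by
  have htop (e : ℕ) : torsionClosure (Submodule.span A (Set.range fun i => b i ^ p ^ e)) = ⊤ :=
    torsionClosure_span_eq_top_of_linearIndependent (by simpa using hb.linearIndependent_pow 0)
      (hb.linearIndependent_pow e) hb.torsionClosure_span
  obtain ⟨d₀, hd₀, hmem₀⟩ := exists_ne_zero_forall_smul_mem (htop 0)
  obtain ⟨d₁, hd₁, hmem₁⟩ := exists_ne_zero_forall_smul_mem (htop 1)
  refine ⟨d₀ * d₁, mul_ne_zero hd₀ hd₁, fun e => ?_⟩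
  induction e with
  | zero =>
    intro s
    rw [pow_zero, pow_one, mul_comm, mul_smul]
    simpa using Submodule.smul_mem _ d₁ (hmem₀ s)
  | succ e ih =>
    intro s
    let N := Submodule.span A (Set.range fun i => b i ^ p ^ (e + 1))
    have hle : Submodule.span A (Set.range fun i => b i ^ p ^ e) ≤
        N.comap (LinearMap.lsmul A S ((d₀ * d₁) ^ p ^ e)) := by
      refine Submodule.span_le.2 (Set.range_subset_iff.2 fun i => ?_)
      have := pow_mem_span_image_pow p e (Submodule.smul_mem _ d₀ (hmem₁ (b i)))
      simpa [N, ← Set.range_comp, Function.comp_def, ← smul_pow, ← mul_smul, ← pow_mul,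
        ← pow_succ'] using this
    have hdvd : (d₀ * d₁) ^ p ^ e * (d₀ * d₁) ^ p ^ e ∣ (d₀ * d₁) ^ p ^ (e + 1) := by
      rw [← pow_add, ← two_mul, pow_succ']
      exact pow_dvd_pow _ (Nat.mul_le_mul_right _ (Fact.out : p.Prime).two_le)
    obtain ⟨a, ha⟩ := hdvd
    rw [ha, mul_comm, mul_smul, mul_smul]
    exact Submodule.smul_mem _ a (hle (ih s))

end FrobeniusBasis

section CartierLinear

/-- The maps usually called `p⁻ᵉ`-linear, or Cartier linear, with `q = p^e`: additive maps
satisfying `ψ (a * b^q) = ψ a * b`. -/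
def IsCartierLinear {A : Type*} [CommRing A] (q : ℕ) (ψ : A →+ A) : Prop :=
  ∀ a b, ψ (a * b ^ q) = ψ a * b

lemma exists_isCartierLinear_field_apply_eq_one {k : Type*} [Field k] (p : ℕ) [ExpChar k p] (n : ℕ)
    {c : k} (hc : c ≠ 0) : ∃ θ : k →+ k, IsCartierLinear (p ^ n) θ ∧ θ c = 1 := by
  let F := (iterateFrobenius k p n).fieldRange
  let root : F ≃+* k := (RingHom.rangeRestrictFieldEquiv (iterateFrobenius k p n)).symm
  obtain ⟨f, hf⟩ := Module.Projective.exists_dual_eq_one F hc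
  refine ⟨(root : F →+ k).comp f.toAddMonoidHom, fun a b => ?_, ?_⟩
  · let b' : F := ⟨b ^ p ^ n, b, rfl⟩
    have hb' : root b' = b :=
      (RingHom.rangeRestrictFieldEquiv (iterateFrobenius k p n)).symm_apply_apply b
    change root (f (a * b ^ p ^ n)) = root (f a) * b
    rw [show a * b ^ p ^ n = b' • a from mul_comm _ _, map_smul, smul_eq_mul, map_mul, hb',
      mul_comm]
  · change root (f c) = 1
    rw [hf, map_one]

variable {σ k : Type*}

lemma le_of_add_smul_eq_add_smul {q : ℕ} {α γ μ ν : σ →₀ ℕ} (hα : ∀ i, α i < q)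
    (h : μ + q • ν = α + q • γ) : ν ≤ γ := fun i => by
  have hi : μ i + q * ν i = α i + q * γ i := by simpa using DFunLike.congr_fun h i
  have hlt : q * ν i < q * (γ i + 1) := by linarith [hα i]
  exact Nat.lt_succ_iff.1 (Nat.lt_of_mul_lt_mul_left hlt)

lemma injective_add_smul {q : ℕ} (hq : q ≠ 0) (α : σ →₀ ℕ) :
    Function.Injective fun γ : σ →₀ ℕ => α + q • γ :=
  (add_right_injective α).comp (smul_right_injective _ hq)

variable [Field k]

/-- The additive map on polynomials whose effect on coefficients is
`(ψ f)_γ = θ (f_{α + qγ})`. -/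
def coeffExtract (θ : k →+ k) {q : ℕ} (hq : q ≠ 0) (α : σ →₀ ℕ) :
    MvPolynomial σ k →+ MvPolynomial σ k :=
  AddMonoidAlgebra.coeffAddEquiv.symm.toAddMonoidHom.comp <|
    (Finsupp.mapRange.addMonoidHom θ).comp <|
      (Finsupp.comapDomain.addMonoidHom (injective_add_smul hq α)).comp
        AddMonoidAlgebra.coeffAddEquiv.toAddMonoidHom

lemma coeff_coeffExtract (θ : k →+ k) {q : ℕ} (hq : q ≠ 0) (α γ : σ →₀ ℕ)
    (f : MvPolynomial σ k) : (coeffExtract θ hq α f).coeff γ = θ (f.coeff (α + q • γ)) :=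
  rfl

lemma isCartierLinear_coeffExtract {p n : ℕ} [ExpChar k p] {θ : k →+ k}
    (hθ : IsCartierLinear (p ^ n) θ) (hq : p ^ n ≠ 0) {α : σ →₀ ℕ} (hα : ∀ i, α i < p ^ n) :
    IsCartierLinear (p ^ n) (coeffExtract θ hq α) := by
  classical
  intro f g
  induction g using MvPolynomial.induction_on' with
  | add g₁ g₂ hg₁ hg₂ => rw [add_pow_expChar_pow, mul_add, map_add, hg₁, hg₂, mul_add]
  | monomial ν v =>
    ext γ
    rw [coeff_coeffExtract, MvPolynomial.monomial_pow, MvPolynomial.coeff_mul_monomial',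
      MvPolynomial.coeff_mul_monomial']
    by_cases hνγ : ν ≤ γ
    · obtain ⟨δ, rfl⟩ := exists_add_of_le hνγ
      have hsplit : α + p ^ n • (ν + δ) = (α + p ^ n • δ) + p ^ n • ν := by
        rw [smul_add, add_comm (p ^ n • ν), add_assoc]
      rw [hsplit, if_pos le_add_self, if_pos hνγ, add_tsub_cancel_right, add_tsub_cancel_left,
        coeff_coeffExtract]
      exact hθ _ _
    · have hle : ¬ p ^ n • ν ≤ α + p ^ n • γ := fun h => hνγ <| by
        obtain ⟨μ, hμ⟩ := exists_add_of_le h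
        exact le_of_add_smul_eq_add_smul hα ((add_comm _ _).trans hμ.symm)
      rw [if_neg hle, if_neg hνγ, map_zero]

lemma exists_isCartierLinear_mvPolynomial_apply_eq_one (p : ℕ) [ExpChar k p] (n : ℕ)
    {f : MvPolynomial σ k} (hf : f ≠ 0) (hdeg : ∀ i, f.degreeOf i < p ^ n) :
    ∃ ψ : MvPolynomial σ k →+ MvPolynomial σ k, IsCartierLinear (p ^ n) ψ ∧ ψ f = 1 := by
  classical
  obtain ⟨α, hα⟩ := MvPolynomial.support_nonempty.2 hf
  obtain ⟨θ, hθ, hθα⟩ :=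
    exists_isCartierLinear_field_apply_eq_one p n (MvPolynomial.mem_support_iff.1 hα)
  have hlt {m : σ →₀ ℕ} (hm : m ∈ f.support) (i : σ) : m i < p ^ n :=
    (MvPolynomial.monomial_le_degreeOf i hm).trans_lt (hdeg i)
  have hq : p ^ n ≠ 0 := pow_ne_zero n (expChar_pos k p).ne'
  refine ⟨coeffExtract θ hq α, isCartierLinear_coeffExtract hθ hq (hlt hα), ?_⟩
  ext γ
  rw [coeff_coeffExtract, MvPolynomial.coeff_one]
  split_ifs with hγ
  · rw [← hγ, smul_zero, add_zero, hθα]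
  · have hsupp : α + p ^ n • γ ∉ f.support := fun h =>
      hγ (le_antisymm zero_le (le_of_add_smul_eq_add_smul (hlt h)
        (by rw [smul_zero, add_zero])))
    rw [MvPolynomial.notMem_support_iff.1 hsupp, map_zero]

end CartierLinear

section CartierExtension

variable {A S ι : Type*} [CommRing A] [CommRing S] [Algebra A S]

/-- The coordinates of `c • x` with respect to a linearly independent family `v` whose span
contains `c • x` for all `x`. -/
def scaledRepr {v : ι → S} (hv : LinearIndependent A v) {c : A}
    (hc : ∀ x : S, c • x ∈ Submodule.span A (Set.range v)) : S →ₗ[A] ι →₀ A :=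
  hv.repr ∘ₗ (LinearMap.lsmul A S c).codRestrict _ hc

lemma linearCombination_scaledRepr {v : ι → S} (hv : LinearIndependent A v) {c : A}
    (hc : ∀ x : S, c • x ∈ Submodule.span A (Set.range v)) (x : S) :
    Finsupp.linearCombination A v (scaledRepr hv hc x) = c • x :=
  hv.linearCombination_repr _

lemma scaledRepr_eq_of_linearCombination_eq {v : ι → S} (hv : LinearIndependent A v) {c : A}
    (hc : ∀ x : S, c • x ∈ Submodule.span A (Set.range v)) {x : S} {l : ι →₀ A}
    (hl : Finsupp.linearCombination A v l = c • x) : scaledRepr hv hc x = l :=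
  hv (by rw [linearCombination_scaledRepr, hl])

variable {p : ℕ} [Fact p.Prime] [CharP S p]

lemma IsFrobeniusBasis.exists_addMonoidHom_smul_pow {b : ι → S} (hb : IsFrobeniusBasis A p b)
    {d : A}
    (hd : ∀ (e : ℕ) (s : S), d ^ p ^ e • s ∈ Submodule.span A (Set.range fun i => b i ^ p ^ e))
    {e : ℕ} {ψ : A →+ A} (hψ : IsCartierLinear (p ^ e) ψ) :
    ∃ Φ : S →+ S, ∀ (a : A) (u : S), Φ (a • u ^ p ^ e) = (ψ a * d) • u := by
  have hq : p ^ e ≠ 0 := pow_ne_zero e (Fact.out : p.Prime).ne_zero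
  have hb₀ : LinearIndependent A b := by simpa using hb.linearIndependent_pow 0
  have hd₀ (s : S) : d • s ∈ Submodule.span A (Set.range b) := by simpa using hd 0 s
  let κ := scaledRepr (hb.linearIndependent_pow e) (hd e)
  refine ⟨(Finsupp.linearCombination A b).toAddMonoidHom.comp
    ((Finsupp.mapRange.addMonoidHom ψ).comp κ.toAddMonoidHom), fun a u => ?_⟩
  let η := scaledRepr hb₀ hd₀ u
  have hη : Finsupp.linearCombination A b η = d • u := linearCombination_scaledRepr hb₀ hd₀ u
  have hκ : κ (a • u ^ p ^ e) =
      η.mapRange (fun x => a * x ^ p ^ e) (by rw [zero_pow hq, mul_zero]) := by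
    refine scaledRepr_eq_of_linearCombination_eq _ _ ?_
    rw [smul_comm, ← smul_pow, ← hη, Finsupp.linearCombination_apply,
      Finsupp.linearCombination_apply, Finsupp.sum_mapRange_index (fun _ => by rw [zero_smul]),
      Finsupp.sum, Finsupp.sum, sum_pow_char_pow, Finset.smul_sum]
    simp only [mul_smul, smul_pow]
  change Finsupp.linearCombination A b ((κ (a • u ^ p ^ e)).mapRange ψ ψ.map_zero) = _
  rw [hκ, Finsupp.linearCombination_apply, Finsupp.sum_mapRange_index (fun _ => by rw [zero_smul]),
    Finsupp.sum_mapRange_index (fun _ => by rw [map_zero, zero_smul]), mul_smul, ← hη,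
    Finsupp.linearCombination_apply, Finsupp.smul_sum]
  simp only [hψ a _, mul_smul]

lemma exists_isCartierLinear_of_smul_pow {q : ℕ} {d : A}
    (hd : ∀ s : S, d ^ q • s ∈ Submodule.span A (Set.range fun s : S => s ^ q))
    {ψ : A →+ A} (hψ : IsCartierLinear q ψ) {Φ : S →+ S}
    (hΦ : ∀ (a : A) (u : S), Φ (a • u ^ q) = (ψ a * d) • u) :
    ∃ Φ' : S →+ S, IsCartierLinear q Φ' ∧
      ∀ a, Φ' (algebraMap A S a) = algebraMap A S (d ^ 2 * ψ a) := by
  refine ⟨Φ.comp (LinearMap.lsmul A S (d ^ q)).toAddMonoidHom, fun s t => ?_, fun a => ?_⟩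
  · have hspan {x : S} (hx : x ∈ Submodule.span A (Set.range fun s : S => s ^ q)) :
        ∀ a : A, Φ (a • (x * t ^ q)) = Φ (a • x) * t := by
      induction hx using Submodule.span_induction with
      | mem x hx =>
        obtain ⟨u, rfl⟩ := hx
        intro a
        rw [← mul_pow, hΦ, hΦ, smul_mul_assoc]
      | zero => simp
      | add x y _ _ hx hy =>
        intro a
        rw [add_mul, smul_add, smul_add, map_add, map_add, hx, hy, add_mul]
      | smul c x _ hx =>
        intro a
        rw [smul_mul_assoc, smul_smul, smul_smul, hx]
    simpa using hspan (hd s) 1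
  · change Φ (d ^ q • algebraMap A S a) = _
    have ha : d ^ q • algebraMap A S a = (a * d ^ q) • (1 : S) ^ q := by
      rw [one_pow, Algebra.smul_def, Algebra.smul_def, mul_one, ← map_mul, mul_comm]
    rw [ha, hΦ, hψ, Algebra.smul_def, mul_one]
    congr 1
    ring

end CartierExtension

section CartierLift

variable (A R : Type*) [CommRing A] [IsDomain A] [IsNoetherianRing A] [CommRing R] [Algebra A R]
  [Module.Finite A R] (p : ℕ) [Fact p.Prime] [CharP R p]

theorem exists_forall_isCartierLinear_lift : ∃ (e₀ : ℕ) (c : A), c ≠ 0 ∧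
    ∀ (e : ℕ) (ψ : A →+ A), IsCartierLinear (p ^ e) ψ → ∃ Ψ : R →+ R,
      (∀ r s, Ψ (r * s ^ p ^ e) = Ψ r * s ^ p ^ e₀) ∧
      ∀ a, Ψ (algebraMap A R a) = algebraMap A R (c * ψ (a ^ p ^ e₀)) := by
  obtain ⟨e₀, t, b, ht, hb⟩ := exists_isFrobeniusBasis_adjoinPow A R p
  have : Finite t := ht
  let S := adjoinPow A R (p ^ e₀)
  have : Module.Finite A S := inferInstanceAs (Module.Finite A (Subalgebra.toSubmodule S))
  have : CharP S p := (S.val : S →+* R).charP Subtype.val_injective p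
  obtain ⟨d, hd0, hd⟩ := hb.exists_pow_smul_mem_span
  refine ⟨e₀, d ^ 2, pow_ne_zero 2 hd0, fun e ψ hψ => ?_⟩
  obtain ⟨Φ₀, hΦ₀⟩ := hb.exists_addMonoidHom_smul_pow hd hψ
  obtain ⟨Φ, hΦ, hΦa⟩ := exists_isCartierLinear_of_smul_pow
    (fun s => Submodule.span_mono (Set.range_comp_subset_range b (· ^ p ^ e)) (hd e s)) hψ hΦ₀
  let F : R →+* S := (iterateFrobenius R p e₀).codRestrict S fun r => pow_mem_adjoinPow r _
  refine ⟨S.val.toAddMonoidHom.comp (Φ.comp F.toAddMonoidHom), fun r s => ?_, fun a => ?_⟩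
  · change ((Φ (F (r * s ^ p ^ e)) : S) : R) = (Φ (F r) : S) * (F s : S)
    rw [map_mul, map_pow, hΦ, Subalgebra.coe_mul]
  · have hF : F (algebraMap A R a) = algebraMap A S (a ^ p ^ e₀) :=
      Subtype.ext (map_pow (algebraMap A R) a _).symm
    change ((Φ (F (algebraMap A R a)) : S) : R) = _
    rw [hF, hΦa]
    rfl

end CartierLift

section BracketPow

variable {R : Type*} [CommRing R]

lemma pow_mem_bracketPow {I : Ideal R} {x : R} (hx : x ∈ I) (q : ℕ) : x ^ q ∈ bracketPow I q :=
  Ideal.subset_span ⟨x, hx, rfl⟩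

lemma bracketPow_mono {I J : Ideal R} (hIJ : I ≤ J) (q : ℕ) : bracketPow I q ≤ bracketPow J q :=
  Ideal.span_mono (Set.image_mono hIJ)

lemma zeroLocus_bracketPow (I : Ideal R) {q : ℕ} (hq : q ≠ 0) :
    PrimeSpectrum.zeroLocus (bracketPow I q : Set R) = PrimeSpectrum.zeroLocus (I : Set R) := by
  ext P
  simp only [PrimeSpectrum.mem_zeroLocus, SetLike.coe_subset_coe, bracketPow, Ideal.span_le,
    Set.image_subset_iff]
  exact forall₂_congr fun x _ => P.isPrime.pow_mem_iff_mem q hq.pos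

lemma bracketPow_eq_map_iterateFrobenius (p : ℕ) [ExpChar R p] (I : Ideal R) (n : ℕ) :
    bracketPow I (p ^ n) = I.map (iterateFrobenius R p n) :=
  rfl

lemma map_mem_bracketPow {Ψ : R →+ R} {m q q' : ℕ} (hΨ : ∀ r s, Ψ (r * s ^ q) = Ψ r * s ^ q')
    {I : Ideal R} {x : R} (hx : x ∈ bracketPow I (m * q)) : Ψ x ∈ bracketPow I (m * q') := by
  suffices ∀ r, Ψ (r * x) ∈ bracketPow I (m * q') by simpa using this 1
  induction hx using Submodule.span_induction with
  | mem x hx =>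
    obtain ⟨y, hy, rfl⟩ := hx
    intro r
    simp only [pow_mul, hΨ]
    rw [← pow_mul]
    exact Ideal.mul_mem_left _ _ (pow_mem_bracketPow hy _)
  | zero => simp
  | add x y _ _ hx hy => intro r; rw [mul_add, map_add]; exact add_mem (hx r) (hy r)
  | smul c x _ hx => intro r; rw [smul_eq_mul, ← mul_assoc]; exact hx _

lemma isHomogeneous_bracketPow {ι σ : Type*} [AddMonoid ι] [DecidableEq ι] [SetLike σ R]
    [AddSubmonoidClass σ R] {𝒜 : ι → σ} [GradedRing 𝒜] (p : ℕ) [ExpChar R p] {I : Ideal R}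
    (hI : I.IsHomogeneous 𝒜) (n : ℕ) : (bracketPow I (p ^ n)).IsHomogeneous 𝒜 := by
  obtain ⟨s, rfl⟩ := (Ideal.IsHomogeneous.iff_exists 𝒜 I).1 hI
  rw [bracketPow_eq_map_iterateFrobenius, Ideal.map_span]
  refine Ideal.homogeneous_span 𝒜 _ ?_
  rintro _ ⟨_, ⟨y, -, rfl⟩, rfl⟩
  obtain ⟨i, hi⟩ := y.2
  exact ⟨p ^ n • i, SetLike.pow_mem_graded _ hi⟩

variable (k : Type*) [Field k] [Algebra k R]

lemma finite_quotient_iff_of_zeroLocus_eq [Algebra.FiniteType k R] {I I' : Ideal R}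
    (h : PrimeSpectrum.zeroLocus (I : Set R) = PrimeSpectrum.zeroLocus (I' : Set R)) :
    Module.Finite k (R ⧸ I) ↔ Module.Finite k (R ⧸ I') := by
  rw [Module.finite_iff_krullDimLE_zero, Module.finite_iff_krullDimLE_zero, Ring.krullDimLE_iff,
    Ring.krullDimLE_iff, ringKrullDim_quotient, ringKrullDim_quotient, h]

lemma finite_quotient_bracketPow [Algebra.FiniteType k R] {I : Ideal R}
    (hI : IsFiniteLength R (R ⧸ I)) {q : ℕ} (hq : q ≠ 0) :
    Module.Finite k (R ⧸ bracketPow I q) := by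
  have : IsArtinianRing (R ⧸ I) :=
    isArtinian_of_tower R (isFiniteLength_iff_isNoetherian_isArtinian.1 hI).2
  exact (finite_quotient_iff_of_zeroLocus_eq k (zeroLocus_bracketPow I hq)).2
    ((Module.finite_iff_isArtinianRing k _).2 this)

end BracketPow

section Dimension

variable {A R : Type*} [CommRing A] [CommRing R] [Algebra A R] [Algebra.IsIntegral A R]

variable (A R) in
lemma ringKrullDim_le_of_isIntegral : ringKrullDim R ≤ ringKrullDim A :=
  Order.krullDim_le_of_strictMono (PrimeSpectrum.comap (algebraMap A R)) fun P Q h =>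
    Ideal.IsIntegral.comap_lt_comap (I := P.asIdeal) (J := Q.asIdeal) h

variable (A R) in
lemma ringKrullDim_eq_of_isIntegral [FaithfulSMul A R] : ringKrullDim R = ringKrullDim A := by
  refine le_antisymm (ringKrullDim_le_of_isIntegral A R) (iSup_le fun l => ?_)
  obtain ⟨P, hP⟩ := Algebra.IsIntegral.comap_surjective A R l.head
  have : P.asIdeal.LiesOver l.head.asIdeal := ⟨congrArg PrimeSpectrum.asIdeal hP.symm⟩
  obtain ⟨L, hL, -⟩ := Ideal.exists_ltSeries_of_hasGoingUp (S := R) l P.asIdeal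
  exact hL ▸ Order.LTSeries.length_le_krullDim L

lemma comap_eq_bot_of_ringKrullDim_le_quotient [IsDomain A] {s : ℕ} (hA : ringKrullDim A = s)
    {P : Ideal R} (hP : ringKrullDim A ≤ ringKrullDim (R ⧸ P)) :
    P.comap (algebraMap A R) = ⊥ := by
  refine (Submodule.eq_bot_iff _).2 fun a ha => ?_
  by_contra ha0
  have hle : Ideal.span {a} ≤ P.comap (algebraMap A R) :=
    (Ideal.span_singleton_le_iff_mem _).2 ha
  have hdrop : ringKrullDim A + 1 ≤ ringKrullDim A :=
    calc ringKrullDim A + 1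
      _ ≤ ringKrullDim (R ⧸ P) + 1 := by gcongr
      _ ≤ ringKrullDim (A ⧸ P.comap (algebraMap A R)) + 1 := by
        gcongr
        exact ringKrullDim_le_of_isIntegral _ _
      _ ≤ ringKrullDim (A ⧸ Ideal.span {a}) + 1 := by
        gcongr
        exact ringKrullDim_le_of_surjective _ (Ideal.Quotient.factor_surjective hle)
      _ ≤ ringKrullDim A :=
        ringKrullDim_quotient_succ_le_of_nonZeroDivisor (mem_nonZeroDivisors_of_ne_zero ha0)
  rw [hA] at hdrop
  have : s + 1 ≤ s := mod_cast hdrop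
  omega

end Dimension

section Counting

lemma finrank_add_finrank_quotient_le {k R V : Type*} [Field k] [CommRing R] [Algebra k R]
    [AddCommGroup V] [Module k V] {I J : Ideal R} (hIJ : I ≤ J) [Module.Finite k (R ⧸ I)]
    (T : V →ₗ[k] R) (hTJ : ∀ v, T v ∈ J) (hTI : ∀ v, T v ∈ I → v = 0) :
    Module.finrank k V + Module.finrank k (R ⧸ J) ≤ Module.finrank k (R ⧸ I) := by
  let F : (R ⧸ I) →ₗ[k] R ⧸ J := (Ideal.Quotient.factorₐ k hIJ).toLinearMap
  let T' : V →ₗ[k] R ⧸ I := (Ideal.Quotient.mkₐ k I).toLinearMap ∘ₗ T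
  have hF : LinearMap.range F = ⊤ :=
    LinearMap.range_eq_top.2 (Ideal.Quotient.factor_surjective hIJ)
  have hT' : Function.Injective T' := by
    refine (injective_iff_map_eq_zero T').2 fun v hv => hTI v ?_
    exact Ideal.Quotient.eq_zero_iff_mem.1 hv
  have hle : LinearMap.range T' ≤ LinearMap.ker F := by
    rintro _ ⟨v, rfl⟩
    exact Ideal.Quotient.eq_zero_iff_mem.2 (hTJ v)
  calc Module.finrank k V + Module.finrank k (R ⧸ J)
    _ = Module.finrank k (LinearMap.range T') + Module.finrank k (LinearMap.range F) := by
      rw [LinearMap.finrank_range_of_inj hT', hF, finrank_top]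
    _ ≤ Module.finrank k (LinearMap.ker F) + Module.finrank k (LinearMap.range F) := by
      gcongr
      exact Submodule.finrank_mono hle
    _ = Module.finrank k (R ⧸ I) := by rw [add_comm, LinearMap.finrank_range_add_finrank_ker]

lemma finrank_restrictSupport_forall_lt (σ k : Type*) [Fintype σ] [Field k] (q : ℕ) :
    Module.finrank k (MvPolynomial.restrictSupport k {m : σ →₀ ℕ | ∀ i, m i < q}) =
      q ^ Fintype.card σ := by
  classical
  let e : {m : σ →₀ ℕ | ∀ i, m i < q} ≃ (σ → Fin q) :=
    (Finsupp.equivFunOnFinite.subtypeEquiv fun _ => Iff.rfl).trans <|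
      (Equiv.subtypePiEquivPi (p := fun _ : σ => (· < q))).trans <|
        Equiv.piCongrRight fun _ => Fin.equivSubtype.symm
  rw [Module.finrank_eq_nat_card_basis (MvPolynomial.basisRestrictSupport k _), Nat.card_congr e,
    Nat.card_eq_fintype_card, Fintype.card_fun, Fintype.card_fin]

end Counting

section ColonLemma

variable {σ k R : Type*} [Finite σ] [Field k] [CommRing R] [Algebra (MvPolynomial σ k) R]
  [Module.Finite (MvPolynomial σ k) R] (p : ℕ) [Fact p.Prime] [CharP R p]

theorem exists_forall_smul_pow_mem_bracketPow : ∃ (e₀ : ℕ) (c : MvPolynomial σ k), c ≠ 0 ∧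
    ∀ (I : Ideal R) (x : R) (n e' : ℕ) (f : MvPolynomial σ k), e₀ ≤ n → f ≠ 0 →
      (∀ i, f.degreeOf i < p ^ e') → f • x ^ p ^ (n + e') ∈ bracketPow I (p ^ (n + e')) →
      c • x ^ p ^ n ∈ bracketPow I (p ^ n) := by
  obtain ⟨e₀, c, hc, hlift⟩ := exists_forall_isCartierLinear_lift (MvPolynomial σ k) R p
  refine ⟨e₀, c, hc, fun I x n e' f hn hf hdeg hmem => ?_⟩
  obtain ⟨m, rfl⟩ := Nat.exists_eq_add_of_le' hn
  have hp : p.Prime := Fact.out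
  have : Nontrivial R := CharP.nontrivial_of_char_ne_one hp.ne_one
  let ι : k →+* R := (algebraMap (MvPolynomial σ k) R).comp MvPolynomial.C
  have : CharP k p := ι.charP ι.injective p
  have hdeg_pow (i : σ) : (f ^ p ^ e₀).degreeOf i < p ^ (e₀ + e') :=
    calc (f ^ p ^ e₀).degreeOf i
      _ ≤ p ^ e₀ * f.degreeOf i := MvPolynomial.degreeOf_pow_le i f _
      _ < p ^ e₀ * p ^ e' := Nat.mul_lt_mul_of_pos_left (hdeg i) (pow_pos hp.pos _)
      _ = p ^ (e₀ + e') := (pow_add p e₀ e').symm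
  obtain ⟨ψ, hψ, hψf⟩ :=
    exists_isCartierLinear_mvPolynomial_apply_eq_one p (e₀ + e') (pow_ne_zero _ hf) hdeg_pow
  obtain ⟨Ψ, hΨ, hΨa⟩ := hlift (e₀ + e') ψ hψ
  have hΨx : Ψ (f • x ^ p ^ (m + e₀ + e')) = c • x ^ p ^ (m + e₀) :=
    calc Ψ (f • x ^ p ^ (m + e₀ + e'))
      _ = Ψ (algebraMap _ R f * (x ^ p ^ m) ^ p ^ (e₀ + e')) := by
        rw [Algebra.smul_def, ← pow_mul, ← pow_add, add_assoc]
      _ = algebraMap _ R (c * ψ (f ^ p ^ e₀)) * (x ^ p ^ m) ^ p ^ e₀ := by rw [hΨ, hΨa]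
      _ = c • x ^ p ^ (m + e₀) := by
        rw [hψf, mul_one, ← Algebra.smul_def, ← pow_mul, ← pow_add]
  rw [add_assoc, pow_add] at hmem
  rw [← hΨx, add_assoc, pow_add p m e₀, pow_add p m]
  exact map_mem_bracketPow hΨ hmem

end ColonLemma

section HilbertKunz

variable {k R : Type*} [Field k] [CommRing R] [Algebra k R]

lemma pow_card_add_finrank_quotient_le {σ : Type*} [Fintype σ] [Algebra (MvPolynomial σ k) R]
    [IsScalarTower k (MvPolynomial σ k) R] {I J : Ideal R} (hIJ : I ≤ J) [Module.Finite k (R ⧸ I)]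
    {z : R} (hz : z ∈ J) {q : ℕ} (hq : 0 < q)
    (h : ∀ f : MvPolynomial σ k, (∀ i, f.degreeOf i < q) → f • z ∈ I → f = 0) :
    q ^ Fintype.card σ + Module.finrank k (R ⧸ J) ≤ Module.finrank k (R ⧸ I) := by
  let V := MvPolynomial.restrictSupport k {m : σ →₀ ℕ | ∀ i, m i < q}
  let T : V →ₗ[k] R :=
    (LinearMap.toSpanSingleton (MvPolynomial σ k) R z).restrictScalars k ∘ₗ V.subtype
  have hTJ (f : V) : T f ∈ J := Submodule.smul_of_tower_mem J (f : MvPolynomial σ k) hz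
  have hTI (f : V) (hf : T f ∈ I) : f = 0 := by
    refine Subtype.ext (h f (fun i => (MvPolynomial.degreeOf_lt_iff hq).2 fun m hm => ?_) hf)
    exact (MvPolynomial.mem_restrictSupport_iff k).1 f.2 hm i
  rw [← finrank_restrictSupport_forall_lt σ k q]
  exact finrank_add_finrank_quotient_le hIJ T hTJ hTI

variable (k R) in
theorem exists_forall_mul_pow_mem_bracketPow_or_pow_add_finrank_le [Algebra.FiniteType k R]
    (p : ℕ) [Fact p.Prime] [CharP R p] {d : ℕ} (hd : ringKrullDim R = d) :
    ∃ (e₀ : ℕ) (c : R), (∀ P : Ideal R, ringKrullDim (R ⧸ P) = d → c ∉ P) ∧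
      ∀ (I J : Ideal R), I ≤ J → IsFiniteLength R (R ⧸ I) → ∀ x ∈ J, ∀ n, e₀ ≤ n →
        c * x ^ p ^ n ∈ bracketPow I (p ^ n) ∨
        ∀ e', (p ^ e') ^ d + Module.finrank k (R ⧸ bracketPow J (p ^ (n + e'))) ≤
          Module.finrank k (R ⧸ bracketPow I (p ^ (n + e'))) := by
  have hp : p.Prime := Fact.out
  have : Nontrivial R := CharP.nontrivial_of_char_ne_one hp.ne_one
  obtain ⟨s, g, hg, hgfin⟩ := exists_finite_inj_algHom_of_fg k R
  let A := MvPolynomial (Fin s) k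
  algebraize [g.toRingHom]
  have : IsScalarTower k A R := IsScalarTower.of_algebraMap_eq fun a => (g.commutes a).symm
  have : Module.Finite A R := hgfin
  have : FaithfulSMul A R := (faithfulSMul_iff_algebraMap_injective A R).2 hg
  have hAR : ringKrullDim A = ringKrullDim R := (ringKrullDim_eq_of_isIntegral A R).symm
  have hA : ringKrullDim A = s := by
    simp [A, MvPolynomial.ringKrullDim_of_isNoetherianRing]
  obtain rfl : s = d := by exact_mod_cast hA.symm.trans (hAR.trans hd)
  obtain ⟨e₀, c, hc, hmem⟩ := exists_forall_smul_pow_mem_bracketPow (σ := Fin s) (k := k) (R := R) p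
  refine ⟨e₀, algebraMap A R c, fun P hP hcP => ?_, fun I J hIJ hI x hx n hn => ?_⟩
  · have hbot := comap_eq_bot_of_ringKrullDim_le_quotient (R := R) hA (hA.trans hP.symm).le
    exact hc (hbot.le hcP)
  · rw [← Algebra.smul_def]
    refine or_iff_not_imp_left.2 fun hnot e' => ?_
    have := finite_quotient_bracketPow k hI (pow_ne_zero (n + e') hp.ne_zero)
    simpa using pow_card_add_finrank_quotient_le (σ := Fin s) (bracketPow_mono hIJ _)
      (pow_mem_bracketPow hx _) (pow_pos hp.pos e') fun f hdeg hf =>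
        by_contra fun hf0 => hnot (hmem I x n e' f hn hf0 hdeg hf)

lemma not_tendsto_zero_of_forall_pow_le_sub {p : ℕ} (hp : p ≠ 0) {u v : ℕ → ℕ} {n d : ℕ}
    (h : ∀ e, (p ^ e) ^ d + v (n + e) ≤ u (n + e)) :
    ¬ Tendsto (fun m => ((u m : ℝ) - v m) / ((p : ℝ) ^ m) ^ d) atTop (nhds 0) := by
  intro hlim
  have : 0 < (p : ℝ) := mod_cast hp.bot_lt
  have hε : 0 < 1 / ((p : ℝ) ^ n) ^ d := by positivity
  refine hε.not_ge (ge_of_tendsto hlim (eventually_atTop.2 ⟨n, fun m hm => ?_⟩))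
  obtain ⟨e, rfl⟩ := Nat.exists_eq_add_of_le hm
  have he : ((p : ℝ) ^ e) ^ d ≤ u (n + e) - v (n + e) := le_sub_iff_add_le.2 (mod_cast h e)
  calc 1 / ((p : ℝ) ^ n) ^ d
    _ = ((p : ℝ) ^ e) ^ d / ((p : ℝ) ^ (n + e)) ^ d := by rw [pow_add, mul_pow]; field_simp
    _ ≤ (u (n + e) - v (n + e)) / ((p : ℝ) ^ (n + e)) ^ d := by gcongr

theorem frobenius_poincare_tight_closure_converse_general [Algebra.FiniteType k R]
    {p : ℕ} (hp : p.Prime) [CharP R p] {d : ℕ} (hd : ringKrullDim R = d)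
    (hequi : ∀ P ∈ minimalPrimes R, ringKrullDim (R ⧸ P) = ringKrullDim R)
    {I J : Ideal R} (hIJ : I ≤ J) (hI : IsFiniteLength R (R ⧸ I))
    (hlim : Tendsto (fun n => ((Module.finrank k (R ⧸ bracketPow I (p ^ n)) : ℝ) -
      Module.finrank k (R ⧸ bracketPow J (p ^ n))) / ((p : ℝ) ^ n) ^ d) atTop (nhds 0)) :
    ∀ x ∈ J, MemTightClosure p I x := by
  intro x hx
  have : Fact p.Prime := ⟨hp⟩
  obtain ⟨e₀, c, hc, hmem⟩ :=
    exists_forall_mul_pow_mem_bracketPow_or_pow_add_finrank_le k R p hd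
  refine ⟨c, fun P hP => hc P ((hequi P hP).trans hd), e₀, fun n hn => ?_⟩
  exact (hmem I J hIJ hI x hx n hn).resolve_right fun hgrowth =>
    not_tendsto_zero_of_forall_pow_le_sub hp.ne_zero hgrowth hlim

end HilbertKunz

section FrobeniusPoincare

lemma tsum_finrank_of_isInternal {ι k M : Type*} [DecidableEq ι] [Field k] [AddCommGroup M]
    [Module k M] [Module.Finite k M] {V : ι → Submodule k M} (hV : DirectSum.IsInternal V) :
    ∑' i, (Module.finrank k (V i) : ℂ) = Module.finrank k M := by
  classical
  have hfin : {i | V i ≠ ⊥}.Finite :=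
    WellFoundedGT.finite_ne_bot_of_iSupIndep hV.submodule_iSupIndep
  have : Fintype {i | V i ≠ ⊥} := hfin.fintype
  have hsum : ∑ i : {i | V i ≠ ⊥}, Module.finrank k (V i) = Module.finrank k M := by
    rw [← Module.finrank_directSum]
    exact (LinearEquiv.ofBijective (DirectSum.coeLinearMap fun i : {i // V i ≠ ⊥} => V i)
      (DirectSum.isInternal_ne_bot_iff.2 hV)).finrank_eq
  have hsupp : Function.support (fun i => (Module.finrank k (V i) : ℂ)) ⊆ {i | V i ≠ ⊥} :=
    fun i hi hbot => hi (by simp [hbot])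
  rw [← tsum_subtype_eq_of_support_subset hsupp, tsum_fintype, ← hsum, Nat.cast_sum]

variable {k R : Type*} [Field k] [CommRing R] [Algebra k R]

lemma isInternal_map_mkQ {ι : Type*} [DecidableEq ι] [AddMonoid ι] (𝒜 : ι → Submodule k R)
    [GradedAlgebra 𝒜] {N : Ideal R} (hN : N.IsHomogeneous 𝒜) :
    DirectSum.IsInternal fun j => (𝒜 j).map (N.mkQ.restrictScalars k) := by
  let π (j : ι) : (R ⧸ N) →ₗ[k] R ⧸ N :=
    (N.restrictScalars k).mapQ (N.restrictScalars k) (GradedAlgebra.proj 𝒜 j) fun _ hx => hN j hx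
  have hπ (j : ι) (x : R) : π j (N.mkQ x) = N.mkQ (DirectSum.decompose 𝒜 x j : R) := rfl
  refine DirectSum.isInternal_submodule_of_iSupIndep_of_iSup_eq_top ?_ ?_
  · refine iSupIndep_def.2 fun j => Submodule.disjoint_def.2 ?_
    rintro _ ⟨y, hy, rfl⟩ hx
    have hker : ⨆ i, ⨆ (_ : i ≠ j), (𝒜 i).map (N.mkQ.restrictScalars k) ≤ LinearMap.ker (π j) := by
      refine iSup₂_le fun i hij => ?_
      rintro _ ⟨z, hz, rfl⟩
      rw [LinearMap.mem_ker, LinearMap.restrictScalars_apply, hπ,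
        DirectSum.decompose_of_mem_ne 𝒜 hz hij, map_zero]
    have := LinearMap.mem_ker.1 (hker hx)
    rwa [LinearMap.restrictScalars_apply, hπ, DirectSum.decompose_of_mem_same 𝒜 hy] at this
  · rw [← Submodule.map_iSup, (DirectSum.Decomposition.isInternal 𝒜).submodule_iSup_eq_top,
      Submodule.map_top, LinearMap.range_eq_top]
    exact N.mkQ_surjective

variable [Algebra.FiniteType k R] (𝒜 : ℤ → Submodule k R) [GradedAlgebra 𝒜]
  {p : ℕ} (hp : p.Prime) [CharP R p] (d : ℕ)

include hp

lemma FnGen_apply_zero {I : Ideal R} (hI : I.IsHomogeneous 𝒜) (hIfl : IsFiniteLength R (R ⧸ I))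
    (n : ℕ) :
    FnGen k 𝒜 I p d n 0 =
      Module.finrank k (R ⧸ bracketPow I (p ^ n)) / ((p : ℂ) ^ n) ^ d := by
  have : ExpChar R p := .prime hp
  have := finite_quotient_bracketPow k hIfl (pow_ne_zero n hp.ne_zero)
  rw [← tsum_finrank_of_isInternal (isInternal_map_mkQ 𝒜 (isHomogeneous_bracketPow p hI n)),
    FnGen, smul_eq_mul, Ideal.mul_top]
  simp [quotPieceDim, div_eq_inv_mul]

lemma tendsto_finrank_sub_of_tendsto_FnGen_zero {I J : Ideal R} (hI : I.IsHomogeneous 𝒜)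
    (hJ : J.IsHomogeneous 𝒜) (hIfl : IsFiniteLength R (R ⧸ I)) (hJfl : IsFiniteLength R (R ⧸ J))
    {L : ℂ} (hLI : Tendsto (fun n => FnGen k 𝒜 I p d n 0) atTop (nhds L))
    (hLJ : Tendsto (fun n => FnGen k 𝒜 J p d n 0) atTop (nhds L)) :
    Tendsto (fun n => ((Module.finrank k (R ⧸ bracketPow I (p ^ n)) : ℝ) -
      Module.finrank k (R ⧸ bracketPow J (p ^ n))) / ((p : ℝ) ^ n) ^ d) atTop (nhds 0) := by
  have hlim := hLI.sub hLJ
  simp only [FnGen_apply_zero 𝒜 hp d hI hIfl, FnGen_apply_zero 𝒜 hp d hJ hJfl, ← sub_div,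
    sub_self] at hlim
  refine tendsto_ofReal_iff.1 ?_
  push_cast
  exact hlim

end FrobeniusPoincare

/-- **Equality of Frobenius–Poincaré functions forces containment in the tight closure**
when `R` is equidimensional: if `I ⊆ J` are homogeneous, `R/I` has finite length, every
minimal prime `P` of `R` satisfies `dim R/P = dim R`, and `F(R,R,I) = F(R,R,J)`, then
`J ⊆ I*`. -/
theorem frobenius_poincare_tight_closure_converse
    (k R : Type) [Field k] [CommRing R] [Algebra k R] [Algebra.FiniteType k R]
    (p : ℕ) (hp : p.Prime) [CharP R p]
    (𝒜 : ℤ → Submodule k R) [GradedAlgebra 𝒜]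
    (h𝒜neg : ∀ t : ℤ, t < 0 → 𝒜 t = ⊥)
    (h𝒜zero : ∀ x ∈ 𝒜 0, ∃ c : k, algebraMap k R c = x)
    (d : ℕ) (hd : ringKrullDim R = d)
    (hequi : ∀ P ∈ minimalPrimes R, ringKrullDim (R ⧸ P) = ringKrullDim R)
    (I J : Ideal R) (hIJ : I ≤ J)
    (hI : Ideal.IsHomogeneous 𝒜 I) (hJ : Ideal.IsHomogeneous 𝒜 J)
    (hIfl : IsFiniteLength R (R ⧸ I))
    (heq : ∀ y : ℂ, ∃ L : ℂ,
      Tendsto (fun n : ℕ => FnGen k 𝒜 I p d n y) atTop (nhds L) ∧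
      Tendsto (fun n : ℕ => FnGen k 𝒜 J p d n y) atTop (nhds L)) :
    ∀ x ∈ J, MemTightClosure p I x := by
  obtain ⟨L, hLI, hLJ⟩ := heq 0
  have hJfl : IsFiniteLength R (R ⧸ J) :=
    hIfl.of_surjective (f := Submodule.factor hIJ) (Submodule.factor_surjective hIJ)
  exact frobenius_poincare_tight_closure_converse_general hp hd hequi hIJ hIfl
    (tendsto_finrank_sub_of_tendsto_FnGen_zero 𝒜 hp d hI hJ hIfl hJfl hLI hLJ)

end
end
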